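/- arXiv:1806.05200 — 2 statements merged into one kernel-verified Lean document; each statement's English description precedes it below -/
import Mathlib

section
/- For n ≥ 3, the graded Betti numbers in homological degree n and internal degree n+3 satisfy β_{n,n+3}(S/I) = β_{n,n+3}(S/in_<(I)) = 1, where I is the join-meet ideal of the diamond lattice D_{n+2} and in_<(I) its initial ideal with respect to the reverse lexicographic order induced by x > y_1 > ⋯ > y_n > z. -/
open MvPolynomial

noncomputable def xP (K : Type*) [Field K] (n : ℕ) : MvPolynomial (Fin (n + 2)) K := X 0
noncomputable def zP (K : Type*) [Field K] (n : ℕ) : MvPolynomial (Fin (n + 2)) K :=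
  X (Fin.last (n + 1))
noncomputable def yP (K : Type*) [Field K] (n : ℕ) (i : Fin n) : MvPolynomial (Fin (n + 2)) K :=
  X i.succ.castSucc

/-- The join-meet ideal `I` of the diamond lattice `D_{n+2}`. -/
noncomputable def diamondIdeal (K : Type*) [Field K] (n : ℕ) :
    Ideal (MvPolynomial (Fin (n + 2)) K) :=
  Ideal.span {f | ∃ i j : Fin n, i < j ∧ f = yP K n i * yP K n j - xP K n * zP K n}

/-- The initial ideal `in_<(I)` of `I` w.r.t. the reverse lexicographic order induced by
`x > y_1 > ⋯ > y_n > z`, as computed in the paper: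
`(y_i y_j : i < j) + (x y_k z : k ≤ n-1) + (x y_n² z)`. -/
noncomputable def diamondIni (K : Type*) [Field K] (n : ℕ) (hn : 1 ≤ n) :
    Ideal (MvPolynomial (Fin (n + 2)) K) :=
  Ideal.span
    ({f | ∃ i j : Fin n, i < j ∧ f = yP K n i * yP K n j} ∪
      {f | ∃ k : Fin n, (k : ℕ) < n - 1 ∧ f = xP K n * yP K n k * zP K n} ∪
      {xP K n * (yP K n ⟨n - 1, by omega⟩) ^ 2 * zP K n})

def mdeg {σ : Type*} (m : σ →₀ ℕ) : ℕ := m.sum fun _ e => e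

/-- A minimal graded free resolution
`⋯ → F_{i+1} → F_i → ⋯ → F_0 → S/I → 0` of `S/I` over `S = K[x_s : s ∈ σ]`.
`F_i` is free with finite homogeneous basis `B i`, the basis element `b : B i` having
degree `deg i b`; the differentials are graded and have entries in the graded maximal
ideal (minimality); `ε` is a lift of the augmentation `F_0 → S/I`. -/
structure MinGradedFreeRes (K : Type*) [Field K] (σ : Type*) (I : Ideal (MvPolynomial σ K)) where
  B : ℕ → Type
  finB : ∀ i, Finite (B i)
  deg : ∀ i, B i → ℕ
  d : ∀ i, ((B (i + 1)) →₀ MvPolynomial σ K) →ₗ[MvPolynomial σ K] ((B i) →₀ MvPolynomial σ K)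
  ε : ((B 0) →₀ MvPolynomial σ K) →ₗ[MvPolynomial σ K] MvPolynomial σ K
  ε_homog : ∀ b : B 0, (ε (Finsupp.single b 1)).IsHomogeneous (deg 0 b)
  surj : ∀ s : MvPolynomial σ K, ∃ t, ε t - s ∈ I
  exact0 : LinearMap.range (d 0) = Submodule.comap ε (I : Submodule _ _)
  exact : ∀ i, LinearMap.range (d (i + 1)) = LinearMap.ker (d i)
  homog : ∀ i (b : B (i + 1)) (c : B i),
    ∀ m ∈ ((d i (Finsupp.single b 1)) c).support, mdeg m + deg i c = deg (i + 1) b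
  minimal : ∀ i (b : B (i + 1)) (c : B i), coeff 0 ((d i (Finsupp.single b 1)) c) = 0

/-- The graded Betti number `β_{i,j}(S/I)` read off from a minimal graded free resolution:
the number of basis elements of `F_i` of degree `j`. -/
noncomputable def MinGradedFreeRes.betti {K : Type*} [Field K] {σ : Type*}
    {I : Ideal (MvPolynomial σ K)} (F : MinGradedFreeRes K σ I) (i j : ℕ) : ℕ :=
  Nat.card {b : F.B i // F.deg i b = j}


namespace Diamond

section Grading

variable {K : Type*} [Field K] {σ : Type*} {B : Type*} {B' : Type*}

lemma mdeg_eq (m : σ →₀ ℕ) : mdeg m = m.degree := rfl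

/-- degree-`j` component of `s` when `s` is a coefficient of a basis element of degree `e`. -/
noncomputable def hcs (K : Type*) [Field K] (σ : Type*) (e j : ℕ) :
    MvPolynomial σ K →ₗ[K] MvPolynomial σ K :=
  if e ≤ j then homogeneousComponent (j - e) else 0

lemma coeff_hcs (e j : ℕ) (m : σ →₀ ℕ) (s : MvPolynomial σ K) :
    coeff m (hcs K σ e j s) = if mdeg m + e = j then coeff m s else 0 := by
  unfold hcs
  rw [mdeg_eq]
  split_ifs with h1 h2 h2
  · rw [coeff_homogeneousComponent, if_pos (by omega)]
  · rw [coeff_homogeneousComponent, if_neg (by omega)]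
  · omega
  · simp

/-- homogeneous elements of the graded free module. -/
def IsH (deg : B → ℕ) (j : ℕ) (u : B →₀ MvPolynomial σ K) : Prop :=
  ∀ b, ∀ m ∈ (u b).support, mdeg m + deg b = j

noncomputable def gp (deg : B → ℕ) (j : ℕ) :
    (B →₀ MvPolynomial σ K) →ₗ[K] (B →₀ MvPolynomial σ K) :=
  Finsupp.lsum K (fun b => (Finsupp.lsingle b).comp (hcs K σ (deg b) j))

lemma gp_single (deg : B → ℕ) (j : ℕ) (b : B) (s : MvPolynomial σ K) :
    gp deg j (Finsupp.single b s) = Finsupp.single b (hcs K σ (deg b) j s) := by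
  simp [gp]

lemma gp_apply (deg : B → ℕ) (j : ℕ) (u : B →₀ MvPolynomial σ K) (b : B) :
    gp deg j u b = hcs K σ (deg b) j (u b) := by
  classical
  induction u using Finsupp.induction_linear with
  | zero => simp
  | add f g hf hg => simp [hf, hg]
  | single a s =>
    rw [gp_single]
    by_cases h : a = b
    · subst h; simp
    · simp [h]

lemma isH_gp (deg : B → ℕ) (j : ℕ) (u : B →₀ MvPolynomial σ K) : IsH deg j (gp deg j u) := by
  intro b m hm
  rw [mem_support_iff, gp_apply, coeff_hcs] at hm
  by_contra h
  simp [h] at hm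

lemma gp_of_isH {deg : B → ℕ} {j : ℕ} {u : B →₀ MvPolynomial σ K} (h : IsH deg j u) :
    gp deg j u = u := by
  ext b m
  rw [gp_apply, coeff_hcs]
  split_ifs with h1
  · rfl
  · by_contra h2
    exact h1 (h b m (by rw [mem_support_iff]; exact fun h3 => h2 h3.symm))

lemma hcs_mul (e e' j : ℕ) (s q : MvPolynomial σ K)
    (hq : ∀ m ∈ q.support, mdeg m + e' = e) :
    hcs K σ e' j (s * q) = hcs K σ e j s * q := by
  classical
  induction s using MvPolynomial.induction_on' with
  | add f g hf hg => rw [add_mul, map_add, map_add, add_mul, hf, hg]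
  | monomial a r =>
    have h1 : hcs K σ e j (monomial a r) = if mdeg a + e = j then monomial a r else 0 := by
      ext m
      rw [coeff_hcs]
      by_cases hma : a = m
      · subst hma; split_ifs <;> simp
      · split_ifs <;> simp [coeff_monomial, hma]
    rw [h1]
    ext m
    rw [coeff_hcs, coeff_monomial_mul']
    by_cases ham : a ≤ m
    · rw [if_pos ham]
      by_cases hc : coeff (m - a) q = 0
      · split_ifs <;> simp [coeff_monomial_mul', hc]
      · have h2 := hq (m - a) (by rw [mem_support_iff]; exact hc)
        have h3 : mdeg m = mdeg a + mdeg (m - a) := by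
          simp only [mdeg_eq]
          rw [← map_add, add_tsub_cancel_of_le ham]
        have : mdeg m + e' = j ↔ mdeg a + e = j := by omega
        simp only [this]
        split_ifs <;> simp [coeff_monomial_mul', ham]
    · split_ifs <;> simp [coeff_monomial_mul', ham]

lemma gp_smul {deg : B → ℕ} {e : ℕ} {w : B →₀ MvPolynomial σ K} (hw : IsH deg e w) (j : ℕ)
    (s : MvPolynomial σ K) : gp deg j (s • w) = hcs K σ e j s • w := by
  ext1 b
  rw [gp_apply, Finsupp.smul_apply, Finsupp.smul_apply, smul_eq_mul, smul_eq_mul]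
  exact hcs_mul e (deg b) j s (w b) (hw b)

lemma gp_map {deg : B → ℕ} {deg' : B' → ℕ}
    (d : (B' →₀ MvPolynomial σ K) →ₗ[MvPolynomial σ K] (B →₀ MvPolynomial σ K))
    (hd : ∀ b, IsH deg (deg' b) (d (Finsupp.single b 1))) (j : ℕ) (u : B' →₀ MvPolynomial σ K) :
    gp deg j (d u) = d (gp deg' j u) := by
  induction u using Finsupp.induction_linear with
  | zero => simp
  | add f g hf hg => simp [hf, hg]
  | single b s =>
    have : ∀ t : MvPolynomial σ K, Finsupp.single b t = t • Finsupp.single b 1 := by simp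
    rw [gp_single, this s, this (hcs _ _ _ _ _), map_smul d, gp_smul (hd b), map_smul d]

lemma gp_lin {deg : B → ℕ} (a : MvPolynomial σ K) (ha : a.IsHomogeneous 1) (j : ℕ)
    (u : B →₀ MvPolynomial σ K) : gp deg (j + 1) (a • u) = a • gp deg j u := by
  ext1 b
  rw [gp_apply, Finsupp.smul_apply, Finsupp.smul_apply, gp_apply, smul_eq_mul, smul_eq_mul,
    mul_comm, hcs_mul (deg b + 1), mul_comm]
  · congr 1
    ext m
    rw [coeff_hcs, coeff_hcs]
    congr 1
    simp only [eq_iff_iff]; omega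
  · intro m hm
    have := ha (mem_support_iff.1 hm)
    rw [mdeg_eq, Finsupp.degree_eq_weight_one]
    rw [add_comm]; congr 1

/-- homogeneous ideal (in the form we use) -/
def HI (J : Ideal (MvPolynomial σ K)) : Prop :=
  ∀ e j f, f ∈ J → hcs K σ e j f ∈ J

lemma HI_span (G : Set (MvPolynomial σ K)) (hG : ∀ g ∈ G, ∃ k, g.IsHomogeneous k) :
    HI (Ideal.span G) := by
  letI := MvPolynomial.gradedAlgebra (σ := σ) (R := K)
  intro e j f hf
  unfold hcs
  split_ifs
  · refine homogeneousComponent_mem_of_mem (Ideal.homogeneous_span _ _ ?_) hf _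
    intro g hg
    obtain ⟨k, hk⟩ := hG g hg
    exact ⟨k, hk⟩
  · simp

lemma HI_sup {I J : Ideal (MvPolynomial σ K)} (hI : HI I) (hJ : HI J) : HI (I ⊔ J) := by
  intro e j f hf
  obtain ⟨a, ha, b, hb, rfl⟩ := Submodule.mem_sup.1 hf
  rw [map_add]
  exact Submodule.add_mem_sup (hI _ _ _ ha) (hJ _ _ _ hb)

lemma sum_gp [Finite B] (deg : B → ℕ) (u : B →₀ MvPolynomial σ K) :
    ∃ N, u = ∑ j ∈ Finset.range N, gp deg j u := by
  classical
  cases nonempty_fintype B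
  refine ⟨(∑ b, ((u b).totalDegree + deg b)) + 1, ?_⟩
  ext b m
  rw [Finsupp.finsetSum_apply, coeff_sum]
  simp only [gp_apply, coeff_hcs]
  rw [Finset.sum_ite_eq]
  split_ifs with h
  · rfl
  · by_contra hc
    apply h
    rw [Finset.mem_range]
    have h1 : mdeg m ≤ (u b).totalDegree := le_totalDegree (mem_support_iff.2 hc)
    have := Finset.single_le_sum (f := fun b => (u b).totalDegree + deg b) (fun _ _ => Nat.zero_le _)
      (Finset.mem_univ b)
    omega

end Grading


section Machine

variable {K : Type*} [Field K] {σ : Type*} {B : Type*} {B' : Type*}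

/-- `a` is a nonzerodivisor modulo `J`. -/
def Reg (J : Ideal (MvPolynomial σ K)) (a : MvPolynomial σ K) : Prop := ∀ f, a * f ∈ J → f ∈ J

/-- elements with all coordinates in `J`. -/
def cw (B : Type*) (J : Ideal (MvPolynomial σ K)) :
    Submodule (MvPolynomial σ K) (B →₀ MvPolynomial σ K) where
  carrier := {u | ∀ b, u b ∈ J}
  zero_mem' := fun b => by simp
  add_mem' := fun {u v} hu hv b => by
    rw [Finsupp.add_apply]; exact J.add_mem (hu b) (hv b)
  smul_mem' := fun c u hu b => by
    rw [Finsupp.smul_apply]; exact J.mul_mem_left _ (hu b)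

lemma mem_cw {J : Ideal (MvPolynomial σ K)} {u : B →₀ MvPolynomial σ K} :
    u ∈ cw B J ↔ ∀ b, u b ∈ J := Iff.rfl

lemma cw_mono {J J' : Ideal (MvPolynomial σ K)} (h : J ≤ J') : cw B J ≤ cw B J' :=
  fun _ hu b => h (hu b)

lemma map_cw (d : (B' →₀ MvPolynomial σ K) →ₗ[MvPolynomial σ K] (B →₀ MvPolynomial σ K))
    {J : Ideal (MvPolynomial σ K)} {u : B' →₀ MvPolynomial σ K} (hu : u ∈ cw B' J) :
    d u ∈ cw B J := by
  have : u = u.sum fun b s => s • Finsupp.single b 1 := by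
    simp
  rw [this, map_finsuppSum]
  refine Submodule.sum_mem _ fun b _ => ?_
  intro c
  beta_reduce
  rw [map_smul, Finsupp.smul_apply]
  exact J.mul_mem_right _ (hu b)

lemma map_cw' (e : (B' →₀ MvPolynomial σ K) →ₗ[MvPolynomial σ K] MvPolynomial σ K)
    {J : Ideal (MvPolynomial σ K)} {u : B' →₀ MvPolynomial σ K} (hu : u ∈ cw B' J) :
    e u ∈ J := by
  have : u = u.sum fun b s => s • Finsupp.single b 1 := by
    simp
  rw [this, map_finsuppSum]
  refine Submodule.sum_mem _ fun b _ => ?_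
  beta_reduce
  rw [map_smul]
  exact J.mul_mem_right _ (hu b)

lemma cw_sup {J : Ideal (MvPolynomial σ K)} {a : MvPolynomial σ K} {u : B →₀ MvPolynomial σ K}
    (hu : u ∈ cw B (J ⊔ Ideal.span {a})) : ∃ f, u - a • f ∈ cw B J := by
  classical
  have h : ∀ s : MvPolynomial σ K, ∃ f, s ∈ J ⊔ Ideal.span {a} → s - a * f ∈ J := by
    intro s
    by_cases hs : s ∈ J ⊔ Ideal.span {a}
    · obtain ⟨j, hj, t, ht, rfl⟩ := Submodule.mem_sup.1 hs
      obtain ⟨f, rfl⟩ := Ideal.mem_span_singleton'.1 ht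
      exact ⟨f, fun _ => by convert hj using 1; ring⟩
    · exact ⟨0, fun h => absurd h hs⟩
  choose g hg using h
  refine ⟨u.mapRange (fun s => if s = 0 then 0 else g s) (by simp), fun b => ?_⟩
  rw [Finsupp.sub_apply, Finsupp.smul_apply, Finsupp.mapRange_apply, smul_eq_mul]
  split_ifs with h
  · simp [h]
  · exact hg _ (hu b)

lemma smul_mem_cw_sup {J : Ideal (MvPolynomial σ K)} {a : MvPolynomial σ K}
    (f : B →₀ MvPolynomial σ K) : a • f ∈ cw B (J ⊔ Ideal.span {a}) := by
  intro b
  rw [Finsupp.smul_apply, smul_eq_mul]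
  exact Ideal.mem_sup_right (Ideal.mem_span_singleton'.2 ⟨f b, mul_comm _ _⟩)

lemma cw_reg {J : Ideal (MvPolynomial σ K)} {a : MvPolynomial σ K} (h : Reg J a)
    {f : B →₀ MvPolynomial σ K} (hf : a • f ∈ cw B J) : f ∈ cw B J :=
  fun b => h _ (hf b)

lemma gp_cw {J : Ideal (MvPolynomial σ K)} (hJ : HI J) (deg : B → ℕ) (j : ℕ)
    {u : B →₀ MvPolynomial σ K} (hu : u ∈ cw B J) : gp deg j u ∈ cw B J := by
  intro b
  rw [gp_apply]
  exact hJ _ _ _ (hu b)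

variable {I : Ideal (MvPolynomial σ K)} (F : MinGradedFreeRes K σ I)

lemma isH_d (i : ℕ) (b : F.B (i + 1)) : IsH (F.deg i) (F.deg (i + 1) b) (F.d i (Finsupp.single b 1)) :=
  fun c m hm => F.homog i b c m hm

/-- boundaries modulo `J` -/
noncomputable def bd (k : ℕ) (J : Ideal (MvPolynomial σ K)) :
    Submodule (MvPolynomial σ K) (F.B k →₀ MvPolynomial σ K) :=
  LinearMap.range (F.d k) ⊔ cw (F.B k) J

lemma mem_bd {k : ℕ} {J : Ideal (MvPolynomial σ K)} {u : F.B k →₀ MvPolynomial σ K} :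
    u ∈ bd F k J ↔ ∃ v, u - F.d k v ∈ cw (F.B k) J := by
  constructor
  · intro h
    obtain ⟨_, ⟨v, rfl⟩, w, hw, rfl⟩ := Submodule.mem_sup.1 h
    exact ⟨v, by simpa using hw⟩
  · rintro ⟨v, hv⟩
    have := Submodule.add_mem_sup (LinearMap.mem_range_self (F.d k) v) hv
    simpa [bd] using this

lemma cw_le_bd {k : ℕ} {J : Ideal (MvPolynomial σ K)} : cw (F.B k) J ≤ bd F k J := le_sup_right

lemma bd_mono {k : ℕ} {J J' : Ideal (MvPolynomial σ K)} (h : J ≤ J') : bd F k J ≤ bd F k J' :=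
  sup_le_sup_left (cw_mono h) _

lemma dd (k : ℕ) (v) : F.d k (F.d (k + 1) v) = 0 := by
  have : F.d (k + 1) v ∈ LinearMap.ker (F.d k) := by
    rw [← F.exact k]; exact LinearMap.mem_range_self _ _
  exact this

lemma d_bd {k : ℕ} {J : Ideal (MvPolynomial σ K)} {u} (hu : u ∈ bd F (k + 1) J) :
    F.d k u ∈ cw (F.B k) J := by
  obtain ⟨v, hv⟩ := (mem_bd F).1 hu
  have := map_cw (F.d k) hv
  rwa [map_sub, dd, sub_zero] at this

/-- exactness modulo `J` from position `k` on -/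
def EX (J : Ideal (MvPolynomial σ K)) (k : ℕ) : Prop :=
  ∀ q, k ≤ q → ∀ x, F.d q x ∈ cw (F.B q) J → x ∈ bd F (q + 1) J

def EX0 (J : Ideal (MvPolynomial σ K)) : Prop :=
  ∀ x, F.ε x ∈ I ⊔ J → x ∈ bd F 0 J

lemma ε_d (v) : F.ε (F.d 0 v) ∈ I := by
  have : F.d 0 v ∈ Submodule.comap F.ε (I : Submodule _ _) := by
    rw [← F.exact0]; exact LinearMap.mem_range_self _ _
  exact this

lemma ε_bd {J : Ideal (MvPolynomial σ K)} {u} (hu : u ∈ bd F 0 J) : F.ε u ∈ I ⊔ J := by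
  obtain ⟨v, hv⟩ := (mem_bd F).1 hu
  have := map_cw' F.ε hv
  rw [map_sub] at this
  have h2 := Submodule.add_mem_sup (ε_d F v) this
  simpa using h2

lemma EX_bot : EX F ⊥ 0 ∧ EX0 F ⊥ := by
  constructor
  · intro q _ x hx
    have : F.d q x = 0 := by
      ext1 b; simpa using hx b
    have h : x ∈ LinearMap.ker (F.d q) := this
    rw [← F.exact q] at h
    exact Submodule.mem_sup_left h
  · intro x hx
    rw [sup_bot_eq] at hx
    have h : x ∈ Submodule.comap F.ε (I : Submodule _ _) := hx
    rw [← F.exact0] at h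
    exact Submodule.mem_sup_left h

/-- common step -/
lemma EX_step_aux {J : Ideal (MvPolynomial σ K)} {a : MvPolynomial σ K} {q : ℕ}
    (hex : ∀ x, F.d q x ∈ cw (F.B q) J → x ∈ bd F (q + 1) J)
    {x} {f : F.B q →₀ MvPolynomial σ K} (hf : f ∈ bd F q J)
    (hx : F.d q x - a • f ∈ cw (F.B q) J) : x ∈ bd F (q + 1) (J ⊔ Ideal.span {a}) := by
  obtain ⟨g, hg⟩ := (mem_bd F).1 hf
  have h1 : F.d q (x - a • g) ∈ cw (F.B q) J := by
    have := (cw (F.B q) J).add_mem hx ((cw (F.B q) J).smul_mem a hg)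
    convert this using 1
    rw [map_sub, map_smul, smul_sub]; abel
  have h2 := bd_mono F (le_sup_left : J ≤ J ⊔ Ideal.span {a}) (hex _ h1)
  have h3 := cw_le_bd F (smul_mem_cw_sup (J := J) (a := a) g)
  simpa using Submodule.add_mem _ h2 h3

lemma EX_step {J : Ideal (MvPolynomial σ K)} {a : MvPolynomial σ K} {k : ℕ}
    (hex : EX F J k) (ha : Reg J a) : EX F (J ⊔ Ideal.span {a}) (k + 1) := by
  intro q hq x hx
  obtain ⟨q, rfl⟩ : ∃ p, q = p + 1 := ⟨q - 1, by omega⟩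
  obtain ⟨f, hf⟩ := cw_sup hx
  refine EX_step_aux F (hex (q + 1) (by omega)) (hex q (by omega) f ?_) hf
  have := map_cw (F.d q) hf
  rw [map_sub, dd, zero_sub, map_smul, neg_mem_iff] at this
  exact cw_reg ha this

lemma EX_step0 {J : Ideal (MvPolynomial σ K)} {a : MvPolynomial σ K}
    (hex : EX F J 0 ∧ EX0 F J) (ha : Reg J a) (haI : Reg (I ⊔ J) a) :
    EX F (J ⊔ Ideal.span {a}) 0 ∧ EX0 F (J ⊔ Ideal.span {a}) := by
  constructor
  · intro q _ x hx
    rcases Nat.eq_zero_or_pos q with rfl | hq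
    · obtain ⟨f, hf⟩ := cw_sup hx
      refine EX_step_aux F (hex.1 0 le_rfl) (hex.2 f ?_) hf
      have := map_cw' F.ε hf
      rw [map_sub, map_smul, smul_eq_mul] at this
      apply haI
      have h2 := Submodule.sub_mem _ (Submodule.mem_sup_left (T := J) (ε_d F x)) (Submodule.mem_sup_right (S := I) this)
      simpa using h2
    · exact EX_step F hex.1 ha q hq x hx
  · intro x hx
    rw [← sup_assoc] at hx
    obtain ⟨j, hj, s, hs, hjs⟩ := Submodule.mem_sup.1 hx
    obtain ⟨s, rfl⟩ := Ideal.mem_span_singleton'.1 hs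
    obtain ⟨t, ht⟩ := F.surj s
    have h1 : F.ε (x - a • t) ∈ I ⊔ J := by
      rw [map_sub, map_smul, ← hjs, smul_eq_mul]
      have := Submodule.sub_mem _ hj (Ideal.mul_mem_left _ a (Submodule.mem_sup_left (T := J) ht))
      convert this using 1; ring
    have h2 := bd_mono F (le_sup_left : J ≤ J ⊔ Ideal.span {a}) (hex.2 _ h1)
    have h3 := cw_le_bd F (smul_mem_cw_sup (J := J) (a := a) t)
    simpa using Submodule.add_mem _ h2 h3

/-- the homogeneous socle elements of degree `k + 3` in position `k` -/
def ZZ (k : ℕ) (J : Ideal (MvPolynomial σ K)) (u : F.B k →₀ MvPolynomial σ K) : Prop :=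
  IsH (F.deg k) (k + 3) u ∧ ∀ s : MvPolynomial σ K, coeff 0 s = 0 → s • u ∈ bd F k J

def PP (k : ℕ) (J : Ideal (MvPolynomial σ K)) : Prop :=
  ∃ e, ZZ F k J e ∧ e ∉ bd F k J ∧ ∀ u, ZZ F k J u → ∃ c : K, u - (C c : MvPolynomial σ K) • e ∈ bd F k J

lemma coeff_zero_of_hom {a : MvPolynomial σ K} (ha : a.IsHomogeneous 1) : coeff 0 a = 0 := by
  by_contra h
  have := ha h
  simp at this

lemma isH_lin {deg : B → ℕ} {a : MvPolynomial σ K} (ha : a.IsHomogeneous 1) {j : ℕ}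
    {u : B →₀ MvPolynomial σ K} (hu : IsH deg j u) : gp deg (j + 1) (a • u) = a • u := by
  rw [gp_lin a ha, gp_of_isH hu]

lemma exists_up {J : Ideal (MvPolynomial σ K)} {a : MvPolynomial σ K} {k : ℕ} (hJ : HI J)
    (hex : EX F J k) (ha : a.IsHomogeneous 1) {u} (hu : ZZ F k J u) :
    ∃ v, ZZ F (k + 1) (J ⊔ Ideal.span {a}) v ∧ a • u - F.d k v ∈ cw (F.B k) J := by
  obtain ⟨v, hv⟩ := (mem_bd F).1 (hu.2 a (coeff_zero_of_hom ha))
  have hv2 := gp_cw hJ (F.deg k) (k + 3 + 1) hv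
  rw [map_sub, isH_lin ha hu.1, gp_map _ (isH_d F k)] at hv2
  generalize hv' : gp (F.deg (k + 1)) (k + 3 + 1) v = v' at hv2
  refine ⟨v', ⟨?_, ?_⟩, hv2⟩
  · rw [← hv', show k + 1 + 3 = k + 3 + 1 by ring]
    exact isH_gp _ _ _
  · intro s hs
    refine EX_step_aux F (a := a) (f := s • u) (hex k le_rfl) (hu.2 s hs) ?_
    have := (cw (F.B k) J).smul_mem (-s) hv2
    convert this using 1
    rw [map_smul, smul_sub, smul_smul, smul_smul]
    rw [neg_smul, neg_mul, neg_smul, mul_comm]; abel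

lemma rel_iff {J : Ideal (MvPolynomial σ K)} {a : MvPolynomial σ K} {k : ℕ}
    (hex : EX F J k) (ha : Reg J a) {u v} (huv : a • u - F.d k v ∈ cw (F.B k) J) :
    u ∈ bd F k J ↔ v ∈ bd F (k + 1) (J ⊔ Ideal.span {a}) := by
  constructor
  · intro hu
    refine EX_step_aux F (a := a) (f := u) (hex k le_rfl) hu ?_
    rw [← neg_mem_iff]; simpa using huv
  · intro hv
    have h1 := d_bd F hv
    obtain ⟨w, hw⟩ := (mem_bd F).1 hv
    obtain ⟨f, hf⟩ := cw_sup hw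
    have h2 := map_cw (F.d k) hf
    rw [map_sub, map_sub, dd, map_smul, sub_zero] at h2
    refine (mem_bd F).2 ⟨f, cw_reg ha ?_⟩
    have := Submodule.add_mem _ huv h2
    convert this using 1
    rw [smul_sub]; abel

lemma exists_down {J : Ideal (MvPolynomial σ K)} {a : MvPolynomial σ K} {k : ℕ} (hJ : HI J)
    (ha : a.IsHomogeneous 1) (har : Reg J a)
    (hx : (∃ x : MvPolynomial σ K, coeff 0 x = 0 ∧ Reg (J ⊔ Ideal.span {a}) x) ∨
      ∀ x : MvPolynomial σ K, coeff 0 x = 0 → x ∈ J ⊔ Ideal.span {a})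
    {v} (hv : ZZ F (k + 1) (J ⊔ Ideal.span {a}) v) :
    ∃ u, ZZ F k J u ∧ a • u - F.d k v ∈ cw (F.B k) J := by
  have h1 : F.d k v ∈ cw (F.B k) (J ⊔ Ideal.span {a}) := by
    rcases hx with ⟨x, hx0, hxr⟩ | hx
    · have := d_bd F (hv.2 x hx0)
      rw [map_smul] at this
      exact cw_reg hxr this
    · intro b
      apply hx
      have : v = v.sum fun b s => s • Finsupp.single b 1 := by simp
      rw [this, map_finsuppSum, Finsupp.sum, Finsupp.finsetSum_apply, coeff_sum]
      refine Finset.sum_eq_zero fun c _ => ?_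
      rw [map_smul, Finsupp.smul_apply, smul_eq_mul, ← constantCoeff_eq, map_mul,
        constantCoeff_eq, F.minimal, mul_zero]
  obtain ⟨u, hu⟩ := cw_sup h1
  have hu2 := gp_cw hJ (F.deg k) (k + 3 + 1) hu
  rw [map_sub, gp_map _ (isH_d F k), gp_lin a ha, gp_of_isH (by
    have := hv.1; rwa [show k + 1 + 3 = k + 3 + 1 by ring] at this)] at hu2
  generalize hu' : gp (F.deg k) (k + 3) u = u' at hu2
  have hu3 : a • u' - F.d k v ∈ cw (F.B k) J := by
    rw [← neg_mem_iff]; simpa using hu2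
  refine ⟨u', ⟨?_, ?_⟩, hu3⟩
  · rw [← hu']; exact isH_gp _ _ _
  · intro s hs
    obtain ⟨w, hw⟩ := (mem_bd F).1 (hv.2 s hs)
    obtain ⟨f, hf⟩ := cw_sup hw
    have h2 := map_cw (F.d k) hf
    rw [map_sub, map_sub, dd, map_smul, map_smul, sub_zero] at h2
    refine (mem_bd F).2 ⟨f, cw_reg har ?_⟩
    have := Submodule.add_mem _ ((cw (F.B k) J).smul_mem s hu3) h2
    convert this using 1
    rw [smul_sub, smul_sub, smul_smul, smul_smul, mul_comm]; abel

lemma PP_step {J : Ideal (MvPolynomial σ K)} {a : MvPolynomial σ K} {k : ℕ} (hJ : HI J)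
    (hex : EX F J k)
    (ha : a.IsHomogeneous 1) (har : Reg J a)
    (hx : (∃ x : MvPolynomial σ K, coeff 0 x = 0 ∧ Reg (J ⊔ Ideal.span {a}) x) ∨
      ∀ x : MvPolynomial σ K, coeff 0 x = 0 → x ∈ J ⊔ Ideal.span {a})
    (hP : PP F k J) : PP F (k + 1) (J ⊔ Ideal.span {a}) := by
  obtain ⟨e, he, heb, hall⟩ := hP
  obtain ⟨e', he', hee'⟩ := exists_up F hJ hex ha he
  refine ⟨e', he', fun h => heb ((rel_iff F hex har hee').2 h), ?_⟩
  intro v hv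
  obtain ⟨u, hu, huv⟩ := exists_down F hJ ha har hx hv
  obtain ⟨c, hc⟩ := hall u hu
  refine ⟨c, (rel_iff F hex har ?_).1 hc⟩
  have := Submodule.sub_mem _ huv ((cw (F.B k) J).smul_mem (C c) hee')
  convert this using 1
  rw [smul_sub, smul_sub, map_sub, map_smul, smul_smul, smul_smul, mul_comm]; abel

lemma PP_final {J : Ideal (MvPolynomial σ K)} {k : ℕ}
    (hJ : ∀ x : MvPolynomial σ K, coeff 0 x = 0 ↔ x ∈ J)
    (hP : PP F k J) : F.betti k (k + 3) = 1 := by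
  classical
  have hbd : ∀ u, u ∈ bd F k J ↔ ∀ b, coeff 0 (u b) = 0 := by
    intro u
    constructor
    · intro h b
      obtain ⟨v, hv⟩ := (mem_bd F).1 h
      have h1 := (hJ _).2 (hv b)
      rw [Finsupp.sub_apply, coeff_sub] at h1
      have h2 : coeff 0 (F.d k v b) = 0 := by
        have : v = v.sum fun b s => s • Finsupp.single b 1 := by simp
        rw [this, map_finsuppSum, Finsupp.sum, Finsupp.finsetSum_apply, coeff_sum]
        refine Finset.sum_eq_zero fun c _ => ?_
        rw [map_smul, Finsupp.smul_apply, smul_eq_mul, ← constantCoeff_eq, map_mul,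
          constantCoeff_eq, F.minimal, mul_zero]
      rwa [h2, sub_zero] at h1
    · intro h
      exact cw_le_bd F fun b => (hJ _).1 (h b)
  obtain ⟨e, he, heb, hall⟩ := hP
  rw [hbd] at heb
  push Not at heb
  obtain ⟨b, hb⟩ := heb
  have hdb : F.deg k b = k + 3 := by
    have := he.1 b 0 (mem_support_iff.2 hb)
    simpa [mdeg_eq] using this
  unfold MinGradedFreeRes.betti
  rw [Nat.card_eq_one_iff_unique]
  refine ⟨⟨?_⟩, ⟨⟨b, hdb⟩⟩⟩
  suffices h : ∀ b' : {b : F.B k // F.deg k b = k + 3}, b'.1 = b by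
    intro x y; apply Subtype.ext; rw [h x, h y]
  rintro ⟨b', hb'⟩
  by_contra hne
  simp only at hne
  have hz : ZZ F k J (Finsupp.single b' 1) := by
    constructor
    · intro c m hm
      by_cases hc : b' = c
      · subst hc
        rw [Finsupp.single_eq_same, mem_support_iff, coeff_one] at hm
        have : m = 0 := by by_contra h; exact hm (if_neg (fun h' => h h'.symm))
        subst this
        simpa [mdeg_eq] using hb'
      · simp [hc] at hm
    · intro s hs
      rw [hbd]
      intro c
      rw [Finsupp.smul_apply, smul_eq_mul, ← constantCoeff_eq, map_mul, constantCoeff_eq, hs,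
        zero_mul]
  obtain ⟨c, hc⟩ := hall _ hz
  rw [hbd] at hc
  have h1 := hc b
  have h2 := hc b'
  rw [Finsupp.sub_apply, Finsupp.smul_apply, smul_eq_mul, coeff_sub, coeff_C_mul] at h1 h2
  rw [Finsupp.single_apply, if_neg hne] at h1
  simp [hb] at h1
  simp [h1] at h2

end Machine


section Main

variable {K : Type*} [Field K] {σ : Type*}

lemma hcs_zero (j : ℕ) (f : MvPolynomial σ K) : hcs K σ 0 j f = homogeneousComponent j f := by
  simp [hcs]

variable {I : Ideal (MvPolynomial σ K)} (F : MinGradedFreeRes K σ I)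

lemma gp_ε (j : ℕ) (u : F.B 0 →₀ MvPolynomial σ K) :
    F.ε (gp (F.deg 0) j u) = homogeneousComponent j (F.ε u) := by
  rw [← hcs_zero]
  induction u using Finsupp.induction_linear with
  | zero => simp
  | add f g hf hg => simp [hf, hg]
  | single b s =>
    have : ∀ t : MvPolynomial σ K, Finsupp.single b t = t • Finsupp.single b 1 := by simp
    rw [gp_single, this s, this (hcs _ _ _ _ _), map_smul F.ε, map_smul F.ε, smul_eq_mul,
      smul_eq_mul, hcs_mul (F.deg 0 b)]
    intro m hm
    have := F.ε_homog b (mem_support_iff.1 hm)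
    rw [mdeg_eq, Finsupp.degree_eq_weight_one]
    exact this

lemma mem_vars_iff (s : MvPolynomial σ K) : s ∈ idealOfVars σ K ↔ coeff 0 s = 0 := by
  have := mem_pow_idealOfVars_iff' 1 s
  rw [pow_one] at this
  rw [this]
  constructor
  · intro h; exact h 0 (by simp)
  · intro h x hx
    have : x = 0 := (Finsupp.degree_eq_zero_iff x).1 (by omega)
    rw [this]; exact h

lemma hom_mem_pow {s : MvPolynomial σ K} {k : ℕ} (hs : s.IsHomogeneous k) :
    s ∈ idealOfVars σ K ^ k := by
  rw [mem_pow_idealOfVars_iff]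
  intro x hx
  have := hs (mem_support_iff.1 hx)
  rw [Finsupp.degree_eq_weight_one]
  exact this.ge

lemma PP_base {J : Ideal (MvPolynomial σ K)} (hI : HI I)
    (hex : EX0 F J) {t : MvPolynomial σ K} (ht : t.IsHomogeneous 3) (htn : t ∉ I ⊔ J)
    (h3 : ∀ f : MvPolynomial σ K, f.IsHomogeneous 3 → ∃ c : K, f - C c * t ∈ I ⊔ J)
    (h4 : idealOfVars σ K ^ 4 ≤ I ⊔ J) : PP F 0 J := by
  have hz : ∀ u, IsH (F.deg 0) 3 u → (F.ε u).IsHomogeneous 3 := by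
    intro u hu
    rw [← gp_of_isH hu, gp_ε]
    exact homogeneousComponent_isHomogeneous _ _
  have hz2 : ∀ u, IsH (F.deg 0) 3 u → ZZ F 0 J u := by
    intro u hu
    refine ⟨hu, fun s hs => hex _ ?_⟩
    rw [map_smul, smul_eq_mul]
    apply h4
    rw [show 4 = 1 + 3 by rfl, pow_add, pow_one]
    exact Ideal.mul_mem_mul ((mem_vars_iff s).2 hs) (hom_mem_pow (hz u hu))
  obtain ⟨e, he⟩ := F.surj t
  have he2 : F.ε (gp (F.deg 0) 3 e) - t ∈ I := by
    have := hI 0 3 _ he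
    rwa [hcs_zero, map_sub, homogeneousComponent_eq_self ht, ← gp_ε] at this
  refine ⟨gp (F.deg 0) 3 e, hz2 _ (isH_gp _ _ _), ?_, ?_⟩
  · intro h
    apply htn
    have := Submodule.sub_mem _ (ε_bd F h) (Submodule.mem_sup_left (T := J) he2)
    simpa using this
  · intro u hu
    obtain ⟨c, hc⟩ := h3 _ (hz u hu.1)
    refine ⟨c, hex _ ?_⟩
    rw [map_sub, map_smul, smul_eq_mul]
    have := Submodule.sub_mem _ hc (Ideal.mul_mem_left _ (C c) (Submodule.mem_sup_left (T := J) he2))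
    convert this using 1; ring

/-- ideal generated by the first `k` forms -/
noncomputable def Js (l : ℕ → MvPolynomial σ K) : ℕ → Ideal (MvPolynomial σ K)
  | 0 => ⊥
  | k + 1 => Js l k ⊔ Ideal.span {l k}

lemma HI_bot : HI (⊥ : Ideal (MvPolynomial σ K)) := by
  intro e j f hf
  rw [Ideal.mem_bot] at hf
  simp [hf]

lemma HI_Js {l : ℕ → MvPolynomial σ K} (hl : ∀ k, (l k).IsHomogeneous 1) (k : ℕ) : HI (Js l k) := by
  induction k with
  | zero => exact HI_bot
  | succ k ih =>
    refine HI_sup ih (HI_span _ ?_)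
    rintro g rfl
    exact ⟨1, hl k⟩

theorem machine (n : ℕ) (hI : HI I) (l : ℕ → MvPolynomial σ K)
    (hl : ∀ k, (l k).IsHomogeneous 1) (hreg : ∀ k < n + 2, Reg (Js l k) (l k))
    (hm : ∀ x : MvPolynomial σ K, coeff 0 x = 0 ↔ x ∈ Js l (n + 2))
    (h0 : Reg I (l 0)) (h1 : Reg (I ⊔ Ideal.span {l 0}) (l 1))
    {t : MvPolynomial σ K} (ht : t.IsHomogeneous 3) (htn : t ∉ I ⊔ Js l 2)
    (h3 : ∀ f : MvPolynomial σ K, f.IsHomogeneous 3 → ∃ c : K, f - C c * t ∈ I ⊔ Js l 2)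
    (h4 : idealOfVars σ K ^ 4 ≤ I ⊔ Js l 2) : F.betti n (n + 3) = 1 := by
  have e1 := EX_step0 F (EX_bot F) (a := l 0) (hreg 0 (by omega)) (by rwa [sup_bot_eq])
  have e2 := EX_step0 F e1 (a := l 1) (hreg 1 (by omega)) (by rwa [bot_sup_eq])
  have key : ∀ k ≤ n, EX F (Js l (k + 2)) k ∧ PP F k (Js l (k + 2)) := by
    intro k
    induction k with
    | zero => exact fun _ => ⟨e2.1, PP_base F hI e2.2 ht htn h3 h4⟩
    | succ k ih =>
      intro hk
      obtain ⟨i1, i2⟩ := ih (by omega)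
      refine ⟨EX_step F i1 (hreg _ (by omega)), PP_step F (HI_Js hl _) i1 (hl _)
        (hreg _ (by omega)) ?_ i2⟩
      by_cases hkn : k + 1 = n
      · right
        subst hkn
        exact fun x hx => (hm x).1 hx
      · left
        exact ⟨l (k + 3), coeff_zero_of_hom (hl _), hreg (k + 3) (by omega)⟩
  exact PP_final F hm (key n le_rfl).2

end Main


section Existence

variable {K : Type*} [Field K] {σ : Type*} [Finite σ]

lemma exists_gens {B : Type*} [Finite B] (deg : B → ℕ)
    (Z : Submodule (MvPolynomial σ K) (B →₀ MvPolynomial σ K))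
    (hZ : ∀ j, ∀ u ∈ Z, gp deg j u ∈ Z) :
    ∃ G : Finset (B →₀ MvPolynomial σ K), (∀ g ∈ G, ∃ j, IsH deg j g) ∧
      Submodule.span (MvPolynomial σ K) (G : Set (B →₀ MvPolynomial σ K)) = Z := by
  classical
  obtain ⟨T, hT⟩ := (isNoetherian_submodule.1 inferInstance) Z le_rfl
  choose N hN using fun u : B →₀ MvPolynomial σ K => sum_gp deg u
  refine ⟨T.biUnion fun t => (Finset.range (N t)).image fun j => gp deg j t, ?_, ?_⟩
  · intro g hg
    simp only [Finset.mem_biUnion, Finset.mem_image] at hg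
    obtain ⟨t, _, j, _, rfl⟩ := hg
    exact ⟨j, isH_gp _ _ _⟩
  · apply le_antisymm
    · rw [Submodule.span_le]
      intro g hg
      simp only [Finset.mem_coe, Finset.mem_biUnion, Finset.mem_image] at hg
      obtain ⟨t, ht, j, _, rfl⟩ := hg
      exact hZ _ _ (hT ▸ Submodule.subset_span ht)
    · rw [← hT, Submodule.span_le]
      intro t ht
      rw [hN t]
      refine Submodule.sum_mem _ fun j hj => Submodule.subset_span ?_
      simp only [Finset.mem_coe, Finset.mem_biUnion, Finset.mem_image]
      exact ⟨t, ht, j, hj, rfl⟩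

lemma exists_min_gens {B : Type*} [Finite B] (deg : B → ℕ)
    (Z : Submodule (MvPolynomial σ K) (B →₀ MvPolynomial σ K))
    (hZ : ∀ j, ∀ u ∈ Z, gp deg j u ∈ Z) :
    ∃ (r : ℕ) (deg' : Fin r → ℕ) (d : (Fin r →₀ MvPolynomial σ K) →ₗ[MvPolynomial σ K]
      (B →₀ MvPolynomial σ K)), (∀ b, IsH deg (deg' b) (d (Finsupp.single b 1))) ∧
      LinearMap.range d = Z ∧ ∀ u ∈ LinearMap.ker d, ∀ b, coeff 0 (u b) = 0 := by
  classical
  have hex : ∃ r, ∃ G : Finset (B →₀ MvPolynomial σ K), G.card = r ∧ (∀ g ∈ G, ∃ j, IsH deg j g) ∧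
      Submodule.span (MvPolynomial σ K) (G : Set (B →₀ MvPolynomial σ K)) = Z := by
    obtain ⟨G, h1, h2⟩ := exists_gens deg Z hZ
    exact ⟨_, G, rfl, h1, h2⟩
  obtain ⟨G, hGc, hGh, hGs⟩ := Nat.find_spec hex
  have hmin : ∀ G' : Finset (B →₀ MvPolynomial σ K), (∀ g ∈ G', ∃ j, IsH deg j g) →
      Submodule.span (MvPolynomial σ K) (G' : Set (B →₀ MvPolynomial σ K)) = Z →
      G.card ≤ G'.card := by
    intro G' h1 h2
    rw [hGc]
    exact Nat.find_min' hex ⟨G', rfl, h1, h2⟩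
  clear hGc
  let z : Fin G.card → (B →₀ MvPolynomial σ K) := fun b => (G.equivFin.symm b).1
  have hzG : ∀ b, z b ∈ G := fun b => (G.equivFin.symm b).2
  have hzi : Function.Injective z := fun a b h => G.equivFin.symm.injective (Subtype.ext h)
  have hzr : Set.range z = (G : Set _) := by
    ext g
    constructor
    · rintro ⟨b, rfl⟩; exact hzG b
    · intro hg
      exact ⟨G.equivFin ⟨g, hg⟩, by simp [z]⟩
  choose deg' hdeg' using fun b => hGh (z b) (hzG b)
  let d := Finsupp.linearCombination (MvPolynomial σ K) z
  have hd : ∀ b, d (Finsupp.single b 1) = z b := fun b => by simp [d]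
  have hdh : ∀ b, IsH deg (deg' b) (d (Finsupp.single b 1)) := fun b => by rw [hd]; exact hdeg' b
  refine ⟨G.card, deg', d, hdh, ?_, ?_⟩
  · rw [Finsupp.range_linearCombination, hzr, hGs]
  · intro u hu b0
    by_contra hne
    have hv : d (gp deg' (deg' b0) u) = 0 := by
      rw [← gp_map d hdh, LinearMap.mem_ker.1 hu, map_zero]
    have hv0 : gp deg' (deg' b0) u b0 = C (coeff 0 (u b0)) := by
      rw [gp_apply, hcs, if_pos le_rfl, Nat.sub_self, homogeneousComponent_zero]
    generalize gp deg' (deg' b0) u = v at hv hv0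
    have hmem : z b0 ∈ Submodule.span (MvPolynomial σ K)
        ((G.erase (z b0) : Finset _) : Set (B →₀ MvPolynomial σ K)) := by
      have h1 : d v = ∑ b, v b • z b := by
        change Finsupp.linearCombination (MvPolynomial σ K) z v = _
        rw [Finsupp.linearCombination_apply]
        exact Finsupp.sum_fintype _ _ (fun i => zero_smul _ _)
      rw [hv, ← Finset.add_sum_erase _ _ (Finset.mem_univ b0), hv0] at h1
      have h2 : z b0 = (-C (coeff 0 (u b0))⁻¹ : MvPolynomial σ K) •
          ∑ b ∈ Finset.univ.erase b0, v b • z b := by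
        rw [eq_neg_of_add_eq_zero_right h1.symm, smul_neg, neg_smul, neg_neg, smul_smul, ← C_mul,
          inv_mul_cancel₀ hne, C_1, one_smul]
      rw [h2]
      refine Submodule.smul_mem _ _ (Submodule.sum_mem _ fun b hb => Submodule.smul_mem _ _ ?_)
      apply Submodule.subset_span
      rw [Finset.mem_coe, ← h2, Finset.mem_erase]
      exact ⟨fun h => (Finset.mem_erase.1 hb).1 (hzi h), hzG b⟩
    have h3 := hmin (G.erase (z b0)) (fun g hg => hGh g (Finset.mem_of_mem_erase hg)) (by
      rw [← hGs]
      apply le_antisymm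
      · exact Submodule.span_mono (by simp)
      · rw [Submodule.span_le]
        intro g hg
        by_cases h : g = z b0
        · rw [h]; exact hmem
        · exact Submodule.subset_span (Finset.mem_coe.2 (Finset.mem_erase.2 ⟨h, hg⟩)))
    rw [Finset.card_erase_of_mem (hzG b0)] at h3
    have := Finset.card_pos.2 ⟨_, hzG b0⟩
    omega

structure St (K : Type*) [Field K] (σ : Type*) where
  r : ℕ
  deg : Fin r → ℕ
  Z : Submodule (MvPolynomial σ K) (Fin r →₀ MvPolynomial σ K)
  hZ : ∀ j, ∀ u ∈ Z, gp deg j u ∈ Z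
  hm : ∀ u ∈ Z, ∀ b, coeff 0 (u b) = 0

lemma exists_next (s : St K σ) : ∃ (t : St K σ) (d : (Fin t.r →₀ MvPolynomial σ K)
    →ₗ[MvPolynomial σ K] (Fin s.r →₀ MvPolynomial σ K)),
    (∀ b, IsH s.deg (t.deg b) (d (Finsupp.single b 1))) ∧ LinearMap.range d = s.Z ∧
      LinearMap.ker d = t.Z := by
  obtain ⟨r, deg', d, h1, h2, h3⟩ := exists_min_gens s.deg s.Z s.hZ
  refine ⟨⟨r, deg', LinearMap.ker d, ?_, h3⟩, d, h1, h2, rfl⟩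
  intro j u hu
  rw [LinearMap.mem_ker, ← gp_map d h1, LinearMap.mem_ker.1 hu, map_zero]

noncomputable def nextSt (s : St K σ) : St K σ := (exists_next s).choose

noncomputable def seqSt (s : St K σ) : ℕ → St K σ
  | 0 => s
  | i + 1 => nextSt (seqSt s i)

theorem exists_res (I : Ideal (MvPolynomial σ K)) (hI : HI I) (hIm : ∀ f ∈ I, coeff 0 f = 0) :
    Nonempty (MinGradedFreeRes K σ I) := by
  let e : (Fin 1 →₀ MvPolynomial σ K) →ₗ[MvPolynomial σ K] MvPolynomial σ K := Finsupp.lapply 0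
  let s0 : St K σ := ⟨1, fun _ => 0, Submodule.comap e I, by
    intro j u hu
    change (gp (fun _ => 0) j u) 0 ∈ I
    rw [gp_apply]
    exact hI _ _ _ hu, by
    intro u hu b
    rw [Subsingleton.elim b 0]
    exact hIm _ hu⟩
  have hspec : ∀ i, ∃ d : (Fin (seqSt s0 (i + 1)).r →₀ MvPolynomial σ K)
      →ₗ[MvPolynomial σ K] (Fin (seqSt s0 i).r →₀ MvPolynomial σ K),
      (∀ b, IsH (seqSt s0 i).deg ((seqSt s0 (i + 1)).deg b) (d (Finsupp.single b 1))) ∧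
      LinearMap.range d = (seqSt s0 i).Z ∧ LinearMap.ker d = (seqSt s0 (i + 1)).Z :=
    fun i => (exists_next (seqSt s0 i)).choose_spec
  choose D hD1 hD2 hD3 using hspec
  refine ⟨{
    B := fun i => Fin (seqSt s0 i).r
    finB := fun i => inferInstance
    deg := fun i => (seqSt s0 i).deg
    d := D
    ε := e
    ε_homog := ?_
    surj := ?_
    exact0 := hD2 0
    exact := ?_
    homog := fun i b c m hm => hD1 i b c m hm
    minimal := ?_ }⟩
  · intro b
    have : b = (0 : Fin 1) := Subsingleton.elim (α := Fin 1) _ _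
    subst this
    have h : e (Finsupp.single 0 1) = 1 := by simp [e]
    change (e (Finsupp.single 0 1)).IsHomogeneous 0
    rw [h]
    exact isHomogeneous_one _ _
  · intro s
    refine ⟨Finsupp.single (0 : Fin 1) s, ?_⟩
    have h : e (Finsupp.single 0 s) = s := by simp [e]
    have h2 : e (Finsupp.single 0 s) - s = 0 := by rw [h, sub_self]
    exact h2 ▸ I.zero_mem
  · intro i
    rw [hD3 i]; exact hD2 (i + 1)
  · intro i b c
    apply (seqSt s0 i).hm
    rw [← hD2 i]
    exact LinearMap.mem_range_self _ _

end Existence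


section Crit

variable {K : Type*} [Field K] {σ : Type*}

lemma hom_sub_mem {J : Ideal (MvPolynomial σ K)} (φ ψ : MvPolynomial σ K →ₐ[K] MvPolynomial σ K)
    (h : ∀ i, φ (X i) - ψ (X i) ∈ J) (f : MvPolynomial σ K) : φ f - ψ f ∈ J := by
  induction f using MvPolynomial.induction_on with
  | C a => rw [← algebraMap_eq, AlgHom.commutes, AlgHom.commutes, sub_self]; exact J.zero_mem
  | add p q hp hq =>
    have := J.add_mem hp hq
    convert this using 1
    rw [map_add, map_add]; ring
  | mul_X p i hp =>
    have := J.add_mem (J.mul_mem_right (φ (X i)) hp) (J.mul_mem_left (ψ p) (h i))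
    convert this using 1
    rw [map_mul, map_mul]; ring

lemma sub_hom_mem {J : Ideal (MvPolynomial σ K)} (φ : MvPolynomial σ K →ₐ[K] MvPolynomial σ K)
    (h : ∀ i, X i - φ (X i) ∈ J) (f : MvPolynomial σ K) : f - φ f ∈ J :=
  hom_sub_mem (AlgHom.id K _) φ h f

lemma mem_iff_ker {J : Ideal (MvPolynomial σ K)} (φ : MvPolynomial σ K →ₐ[K] MvPolynomial σ K)
    (h : ∀ i, X i - φ (X i) ∈ J) (h0 : ∀ f ∈ J, φ f = 0) (f : MvPolynomial σ K) :
    f ∈ J ↔ φ f = 0 := by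
  refine ⟨h0 f, fun hf => ?_⟩
  have := sub_hom_mem φ h f
  rwa [hf, sub_zero] at this

lemma reg_of_ker {J : Ideal (MvPolynomial σ K)} (φ : MvPolynomial σ K →ₐ[K] MvPolynomial σ K)
    (h : ∀ i, X i - φ (X i) ∈ J) (h0 : ∀ f ∈ J, φ f = 0) {a : MvPolynomial σ K} (ha : φ a ≠ 0) :
    Reg J a := by
  intro f hf
  rw [mem_iff_ker φ h h0] at hf ⊢
  rw [map_mul] at hf
  exact (mul_eq_zero.1 hf).resolve_left ha

lemma prime_of_ker {a : MvPolynomial σ K} (φ : MvPolynomial σ K →ₐ[K] MvPolynomial σ K)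
    (h : ∀ i, X i - φ (X i) ∈ Ideal.span {a}) (h0 : φ a = 0) (ha : a ≠ 0) : Prime a := by
  have h0' : ∀ f ∈ Ideal.span {a}, φ f = 0 := by
    intro f hf
    obtain ⟨g, rfl⟩ := Ideal.mem_span_singleton'.1 hf
    rw [map_mul, h0, mul_zero]
  rw [← Ideal.span_singleton_prime ha]
  refine ⟨?_, ?_⟩
  · intro ht
    have := h0' 1 (ht ▸ Submodule.mem_top)
    simp at this
  · intro f g hfg
    rw [mem_iff_ker φ h h0'] at hfg
    rw [mem_iff_ker φ h h0', mem_iff_ker φ h h0']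
    rw [map_mul] at hfg
    exact mul_eq_zero.1 hfg

lemma prime_lin {i j : σ} (hij : i ≠ j) (α : K) :
    Prime (X i + C α * X j : MvPolynomial σ K) := by
  classical
  refine prime_of_ker (aeval fun k => if k = i then - (C α * X j) else X k) ?_ ?_ ?_
  · intro k
    rw [aeval_X]
    split_ifs with h
    · subst h
      rw [sub_neg_eq_add]
      exact Ideal.mem_span_singleton_self _
    · rw [sub_self]; exact Ideal.zero_mem _
  · simp [hij.symm, algHom_C]
  · intro h
    have := congrArg (eval fun k => if k = i then (1 : K) else 0) h
    simp [hij.symm] at this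

lemma crit_q {J : Ideal (MvPolynomial σ K)} (φ : MvPolynomial σ K →ₐ[K] MvPolynomial σ K)
    (h : ∀ i, X i - φ (X i) ∈ J) (h0 : ∀ f ∈ J, φ f = 0) (q f : MvPolynomial σ K) :
    f ∈ J ⊔ Ideal.span {q} ↔ φ q ∣ φ f := by
  constructor
  · intro hf
    obtain ⟨j, hj, t, ht, rfl⟩ := Submodule.mem_sup.1 hf
    obtain ⟨s, rfl⟩ := Ideal.mem_span_singleton'.1 ht
    rw [map_add, h0 j hj, zero_add, map_mul]
    exact dvd_mul_left _ _
  · rintro ⟨g, hg⟩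
    have h1 := sub_hom_mem φ h f
    have h2 := sub_hom_mem φ h q
    have : f = ((f - φ f) - (q - φ q) * g) + g * q := by rw [hg]; ring
    rw [this]
    exact Submodule.add_mem_sup (J.sub_mem h1 (J.mul_mem_right _ h2))
      (Ideal.mem_span_singleton'.2 ⟨g, rfl⟩)

lemma dvd_of_prime {R : Type*} [CommRing R] [IsDomain R] {p q g : R} (hp : Prime p) (hpq : ¬ p ∣ q)
    (h : q ∣ p * g) : q ∣ g := by
  obtain ⟨k, hk⟩ := h
  obtain ⟨k', rfl⟩ := (hp.dvd_or_dvd (a := q) (b := k) ⟨g, hk.symm⟩).resolve_left hpq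
  refine ⟨k', mul_left_cancel₀ hp.ne_zero ?_⟩
  rw [hk]; ring

lemma not_dvd_of_eval {p q : MvPolynomial σ K} (v : σ → K) (h0 : eval v p = 0)
    (h1 : eval v q ≠ 0) : ¬ p ∣ q := by
  rintro ⟨g, rfl⟩
  rw [map_mul, h0, zero_mul] at h1
  exact h1 rfl

lemma reg_q {J : Ideal (MvPolynomial σ K)} (φ : MvPolynomial σ K →ₐ[K] MvPolynomial σ K)
    (h : ∀ i, X i - φ (X i) ∈ J) (h0 : ∀ f ∈ J, φ f = 0) (q : MvPolynomial σ K)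
    {a : MvPolynomial σ K} (ha : Prime (φ a)) (haq : ¬ φ a ∣ φ q) : Reg (J ⊔ Ideal.span {q}) a := by
  intro f hf
  rw [crit_q φ h h0] at hf ⊢
  rw [map_mul] at hf
  exact dvd_of_prime ha haq hf

lemma ker_of_span {G : Set (MvPolynomial σ K)} (φ : MvPolynomial σ K →ₐ[K] MvPolynomial σ K)
    (h : ∀ g ∈ G, φ g = 0) : ∀ f ∈ Ideal.span G, φ f = 0 := by
  intro f hf
  have : Ideal.span G ≤ RingHom.ker φ := Ideal.span_le.2 fun g hg => h g hg
  exact this hf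

lemma mem_sup_span {J : Ideal (MvPolynomial σ K)} {a f : MvPolynomial σ K} :
    f ∈ J ⊔ Ideal.span {a} ↔ ∃ g, f - g * a ∈ J := by
  constructor
  · intro hf
    obtain ⟨j, hj, t, ht, rfl⟩ := Submodule.mem_sup.1 hf
    obtain ⟨s, rfl⟩ := Ideal.mem_span_singleton'.1 ht
    exact ⟨s, by simpa using hj⟩
  · rintro ⟨g, hg⟩
    have := Submodule.add_mem_sup hg (Ideal.mem_span_singleton'.2 ⟨g, rfl⟩ : g * a ∈ Ideal.span {a})
    simpa using this

/-- transfer of regularity along `0 → S/C → S/I → S/L → 0` -/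
lemma reg_transfer {I L Q : Ideal (MvPolynomial σ K)} {w a : MvPolynomial σ K}
    (hIL : I ≤ L) (hLI : L ≤ I ⊔ Ideal.span {w}) (hwQ : ∀ g ∈ Q, w * g ∈ I)
    (hQw : ∀ g, w * g ∈ I → g ∈ Q) (hL : Reg L a) (hQ : Reg Q a) : Reg I a := by
  intro f hf
  obtain ⟨g, hg⟩ := mem_sup_span.1 (hLI (hL f (hIL hf)))
  have h1 : w * (a * g) ∈ I := by
    have := I.sub_mem hf (I.mul_mem_left a hg)
    convert this using 1; ring
  have := I.add_mem hg (hwQ g (hQ g (hQw _ h1)))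
  convert this using 1; ring

/-- the hypotheses of `reg_transfer` pass to the quotient by a regular element. -/
lemma transfer_step {I L Q : Ideal (MvPolynomial σ K)} {w a : MvPolynomial σ K}
    (hIL : I ≤ L) (hLI : L ≤ I ⊔ Ideal.span {w}) (hwQ : ∀ g ∈ Q, w * g ∈ I)
    (hQw : ∀ g, w * g ∈ I → g ∈ Q) (hwL : w ∈ L) (hL : Reg L a) :
    (I ⊔ Ideal.span {a} ≤ L ⊔ Ideal.span {a}) ∧
    (L ⊔ Ideal.span {a} ≤ (I ⊔ Ideal.span {a}) ⊔ Ideal.span {w}) ∧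
    (∀ g ∈ Q ⊔ Ideal.span {a}, w * g ∈ I ⊔ Ideal.span {a}) ∧
    (∀ g, w * g ∈ I ⊔ Ideal.span {a} → g ∈ Q ⊔ Ideal.span {a}) := by
  refine ⟨sup_le_sup_right hIL _, ?_, ?_, ?_⟩
  · rw [sup_assoc, sup_comm (Ideal.span {a}), ← sup_assoc]
    exact sup_le_sup_right hLI _
  · intro g hg
    obtain ⟨s, hs⟩ := mem_sup_span.1 hg
    refine mem_sup_span.2 ⟨w * s, ?_⟩
    convert hwQ _ hs using 1; ring
  · intro g hg
    obtain ⟨s, hs⟩ := mem_sup_span.1 hg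
    have h1 : a * s ∈ L := by
      have := L.sub_mem (L.mul_mem_right g hwL) (hIL hs)
      convert this using 1; ring
    obtain ⟨r, hr⟩ := mem_sup_span.1 (hLI (hL s h1))
    refine mem_sup_span.2 ⟨r, hQw _ ?_⟩
    have := I.add_mem hs (I.mul_mem_left a hr)
    convert this using 1; ring

end Crit


section Coords

variable {K : Type*} [Field K] {n : ℕ}

lemma cases3 {P : Fin (n + 2) → Prop} (h0 : P 0) (hy : ∀ j : Fin n, P j.succ.castSucc)
    (hz : P (Fin.last (n + 1))) : ∀ i, P i := by
  intro i
  induction i using Fin.lastCases with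
  | last => exact hz
  | cast i =>
    induction i using Fin.cases with
    | zero => exact h0
    | succ j => exact hy j

/-- a function on the variables given by its values on `x`, `y_j`, `z` -/
def mk3 {A : Type*} (a : A) (b : Fin n → A) (c : A) : Fin (n + 2) → A :=
  Fin.lastCases (motive := fun _ => A) c (fun i => Fin.cases (motive := fun _ => A) a b i)

lemma mk3_x {A : Type*} (a : A) (b : Fin n → A) (c : A) : mk3 a b c 0 = a := by
  have : (0 : Fin (n + 2)) = Fin.castSucc (0 : Fin (n + 1)) := rfl
  rw [mk3, this, Fin.lastCases_castSucc, Fin.cases_zero]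

lemma mk3_y {A : Type*} (a : A) (b : Fin n → A) (c : A) (j : Fin n) :
    mk3 a b c j.succ.castSucc = b j := by
  rw [mk3, Fin.lastCases_castSucc, Fin.cases_succ]

lemma mk3_z {A : Type*} (a : A) (b : Fin n → A) (c : A) : mk3 a b c (Fin.last (n + 1)) = c := by
  rw [mk3, Fin.lastCases_last]

/-- algebra hom given by images of `x`, `y_j`, `z`. -/
noncomputable def sb {A : Type*} [CommRing A] [Algebra K A] (a : A) (b : Fin n → A) (c : A) :
    MvPolynomial (Fin (n + 2)) K →ₐ[K] A := aeval (mk3 a b c)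

variable {A : Type*} [CommRing A] [Algebra K A] (a : A) (b : Fin n → A) (c : A)

@[simp] lemma sb_x : sb a b c (xP K n) = a := by rw [sb, xP, aeval_X, mk3_x]
@[simp] lemma sb_y (j : Fin n) : sb a b c (yP K n j) = b j := by rw [sb, yP, aeval_X, mk3_y]
@[simp] lemma sb_z : sb a b c (zP K n) = c := by rw [sb, zP, aeval_X, mk3_z]
@[simp] lemma sb_C (r : K) : sb a b c (C r) = algebraMap K A r := by
  rw [sb, ← algebraMap_eq, AlgHom.commutes]

@[simp] lemma ev_x (a : K) (b : Fin n → K) (c : K) : eval (mk3 a b c) (xP K n) = a := by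
  rw [xP, eval_X, mk3_x]
@[simp] lemma ev_y (a : K) (b : Fin n → K) (c : K) (j : Fin n) :
    eval (mk3 a b c) (yP K n j) = b j := by rw [yP, eval_X, mk3_y]
@[simp] lemma ev_z (a : K) (b : Fin n → K) (c : K) : eval (mk3 a b c) (zP K n) = c := by
  rw [zP, eval_X, mk3_z]

/-- check a variable-wise congruence -/
lemma sb_cong {J : Ideal (MvPolynomial (Fin (n + 2)) K)} {a : MvPolynomial (Fin (n + 2)) K}
    {b : Fin n → MvPolynomial (Fin (n + 2)) K} {c : MvPolynomial (Fin (n + 2)) K}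
    (hx : xP K n - a ∈ J) (hy : ∀ j, yP K n j - b j ∈ J) (hz : zP K n - c ∈ J) :
    ∀ i, (X i : MvPolynomial (Fin (n + 2)) K) - sb a b c (X i : MvPolynomial (Fin (n + 2)) K) ∈ J := by
  refine cases3 ?_ ?_ ?_
  · have := sb_x (K := K) a b c
    rw [xP] at this
    rw [this]; exact hx
  · intro j
    have := sb_y (K := K) a b c j
    rw [yP] at this
    rw [this]; exact hy j
  · have := sb_z (K := K) a b c
    rw [zP] at this
    rw [this]; exact hz

lemma hom_x : (xP K n).IsHomogeneous 1 := isHomogeneous_X _ _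
lemma hom_z : (zP K n).IsHomogeneous 1 := isHomogeneous_X _ _
lemma hom_y (j : Fin n) : (yP K n j).IsHomogeneous 1 := isHomogeneous_X _ _

lemma x_ne : xP K n ≠ 0 := X_ne_zero _
lemma y_ne (j : Fin n) : yP K n j ≠ 0 := X_ne_zero _

variable (K n) in
/-- the linear forms: `z - x`, `∑ y_j + α x`, then `x, y_0, y_1, …` -/
noncomputable def ll (α : K) : ℕ → MvPolynomial (Fin (n + 2)) K
  | 0 => zP K n - xP K n
  | 1 => ∑ j, yP K n j + C α * xP K n
  | 2 => xP K n
  | (k + 3) => if h : k < n then yP K n ⟨k, h⟩ else xP K n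

lemma hom_ll (α : K) (k : ℕ) : (ll K n α k).IsHomogeneous 1 := by
  match k with
  | 0 => exact hom_z.sub hom_x
  | 1 =>
    refine IsHomogeneous.add (IsHomogeneous.sum _ _ _ fun j _ => hom_y j) ?_
    simpa using (isHomogeneous_C _ α).mul (hom_x (K := K) (n := n))
  | 2 => exact hom_x
  | (k + 3) =>
    rw [ll]
    split_ifs
    · exact hom_y _
    · exact hom_x

lemma Js_le {σ : Type*} {l : ℕ → MvPolynomial σ K} {A : Ideal (MvPolynomial σ K)} {m : ℕ}
    (h : ∀ i < m, l i ∈ A) : Js l m ≤ A := by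
  induction m with
  | zero => exact bot_le
  | succ m ih =>
    refine sup_le (ih fun i hi => h i (by omega)) ?_
    rw [Ideal.span_singleton_le_iff_mem]
    exact h m (by omega)

lemma mem_Js {σ : Type*} {l : ℕ → MvPolynomial σ K} {m i : ℕ} (h : i < m) : l i ∈ Js l m := by
  induction m with
  | zero => omega
  | succ m ih =>
    rcases Nat.lt_succ_iff_lt_or_eq.1 h with h | h
    · exact Ideal.mem_sup_left (ih h)
    · subst h; exact Ideal.mem_sup_right (Ideal.mem_span_singleton_self _)

variable (K n) in
noncomputable def va (k : ℕ) : MvPolynomial (Fin (n + 2)) K := if 0 < k then 0 else xP K n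

variable (K) in
noncomputable def vbb (k : ℕ) (j : Fin n) : MvPolynomial (Fin (n + 2)) K :=
  if j.val + 1 < k then 0 else yP K n j

noncomputable def vb (α : K) (s : Fin n) (k : ℕ) (j : Fin n) : MvPolynomial (Fin (n + 2)) K :=
  if j = s then - (∑ j ∈ Finset.univ.erase s, vbb K k j + C α * va K n k) else vbb K k j

noncomputable def vphi (α : K) (s : Fin n) (k : ℕ) :
    MvPolynomial (Fin (n + 2)) K →ₐ[K] MvPolynomial (Fin (n + 2)) K :=
  sb (va K n k) (vb α s k) (va K n k)

lemma vphi_kill (α : K) (s : Fin n) (hs : s.val + 1 = n) (k : ℕ) (hk : k ≤ n) :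
    ∀ f ∈ Js (ll K n α) (k + 2), vphi α s k f = 0 := by
  have : Js (ll K n α) (k + 2) ≤ RingHom.ker (vphi α s k) := by
    refine Js_le fun i hi => ?_
    rw [RingHom.mem_ker]
    match i with
    | 0 => simp [ll, vphi]
    | 1 =>
      have h1 : ∑ j ∈ Finset.univ.erase s, vb α s k j = ∑ j ∈ Finset.univ.erase s, vbb K k j :=
        Finset.sum_congr rfl fun j hj => by rw [vb, if_neg (Finset.ne_of_mem_erase hj)]
      simp only [ll, vphi, map_add, map_sum, sb_y, map_mul, sb_x, sb_C, algebraMap_eq]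
      rw [← Finset.add_sum_erase _ _ (Finset.mem_univ s), h1, vb, if_pos rfl]
      ring
    | 2 => simp [ll, vphi, va, show 0 < k by omega]
    | (i + 3) =>
      have hin : i < n := by omega
      rw [ll, dif_pos hin, vphi, sb_y, vb, if_neg, vbb, if_pos]
      · simp; omega
      · intro h; rw [← h] at hs; simp at hs; omega
  exact fun f hf => this hf

lemma vphi_cong (α : K) (s : Fin n) (k : ℕ) (hk : k ≤ n) :
    ∀ i, X i - vphi α s k (X i) ∈ Js (ll K n α) (k + 2) := by
  have ha : xP K n - va K n k ∈ Js (ll K n α) (k + 2) := by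
    rw [va]
    split_ifs with h
    · rw [sub_zero]
      exact mem_Js (l := ll K n α) (i := 2) (by omega)
    · rw [sub_self]; exact Ideal.zero_mem _
  have hbb : ∀ j, yP K n j - vbb K k j ∈ Js (ll K n α) (k + 2) := by
    intro j
    rw [vbb]
    split_ifs with h
    · rw [sub_zero]
      have := mem_Js (l := ll K n α) (i := j.val + 3) (m := k + 2) (by omega)
      rwa [ll, dif_pos j.2] at this
    · rw [sub_self]; exact Ideal.zero_mem _
  refine sb_cong ha ?_ ?_
  · intro j
    rw [vb]
    split_ifs with h
    · subst h
      have h1 := mem_Js (l := ll K n α) (i := 1) (m := k + 2) (by omega)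
      have h2 := Ideal.sum_mem (Js (ll K n α) (k + 2)) (t := Finset.univ.erase j)
        (fun i _ => hbb i)
      have h3 := Ideal.sub_mem _ (Ideal.sub_mem _ h1 h2) (Ideal.mul_mem_left _ (C α) ha)
      convert h3 using 1
      rw [ll, ← Finset.add_sum_erase _ _ (Finset.mem_univ j), Finset.sum_sub_distrib]
      ring
    · exact hbb j
  · have h1 := mem_Js (l := ll K n α) (i := 0) (m := k + 2) (by omega)
    have := Ideal.add_mem _ h1 ha
    convert this using 1
    rw [ll]; ring

lemma ll_reg (α : K) (hn : 1 ≤ n) : ∀ k < n + 2, Reg (Js (ll K n α) k) (ll K n α k) := by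
  set s : Fin n := ⟨n - 1, by omega⟩ with hs
  have hs' : s.val + 1 = n := by simp [hs]; omega
  intro k hk
  match k with
  | 0 =>
    intro f hf
    have h0 : ll K n α 0 ≠ 0 := by
      intro h
      have := congrArg (eval (mk3 (n := n) (0 : K) (fun _ => 0) 1)) h
      simp [ll] at this
    have : ll K n α 0 * f = 0 := hf
    rw [(mul_eq_zero.1 this).resolve_left h0]
    exact Ideal.zero_mem _
  | 1 =>
    refine reg_of_ker (sb (xP K n) (yP K n) (xP K n)) (sb_cong ?_ ?_ ?_) ?_ ?_
    · simp
    · simp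
    · exact mem_Js (l := ll K n α) (i := 0) (by omega)
    · have : Js (ll K n α) 1 ≤ RingHom.ker (sb (K := K) (xP K n) (yP K n) (xP K n)) := by
        refine Js_le fun i hi => ?_
        obtain rfl : i = 0 := by omega
        simp [RingHom.mem_ker, ll]
      exact fun f hf => this hf
    · intro h
      have := congrArg (eval (mk3 (n := n) (0 : K) (fun j => if j = s then 1 else 0) 0)) h
      simp [ll, algebraMap_eq] at this
  | (k + 2) =>
    refine reg_of_ker (vphi α s k) (vphi_cong α s k (by omega)) (vphi_kill α s hs' k (by omega)) ?_
    match k with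
    | 0 => simpa [ll, vphi, va] using x_ne
    | (k + 1) =>
      have hin : k < n := by omega
      rw [ll, dif_pos hin, vphi, sb_y, vb, if_neg, vbb, if_neg]
      · exact y_ne _
      · simp
      · intro h; rw [← h] at hs'; simp at hs'; omega

lemma ll_max (α : K) (hn : 1 ≤ n) (f : MvPolynomial (Fin (n + 2)) K) :
    coeff 0 f = 0 ↔ f ∈ Js (ll K n α) (n + 2) := by
  set s : Fin n := ⟨n - 1, by omega⟩ with hs
  have hs' : s.val + 1 = n := by simp [hs]; omega
  rw [mem_iff_ker (vphi α s n) (vphi_cong α s n le_rfl) (vphi_kill α s hs' n le_rfl)]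
  have hb : ∀ j, j ≠ s → vbb K n j = 0 := by
    intro j hj
    rw [vbb, if_pos]
    have : j.val ≠ s.val := fun h => hj (Fin.ext h)
    have := j.2
    omega
  have : vphi α s n = aeval 0 := by
    rw [vphi, sb]
    congr 1
    funext i
    revert i
    have ha : va K n n = 0 := by rw [va, if_pos (by omega)]
    refine cases3 ?_ ?_ ?_
    · rw [mk3_x, ha]; rfl
    · intro j
      rw [mk3_y, vb]
      split_ifs with h
      · rw [Finset.sum_eq_zero (fun j hj => hb j (Finset.ne_of_mem_erase hj)), ha]; simp
      · rw [hb j h]; rfl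
    · rw [mk3_z, ha]; rfl
  rw [this, aeval_zero, algebraMap_eq, C_eq_zero]
  rfl

end Coords


section LIdeal

variable {K : Type*} [Field K] {n : ℕ}

variable (K n) in
noncomputable def YI : Ideal (MvPolynomial (Fin (n + 2)) K) :=
  Ideal.span {f | ∃ i j : Fin n, i ≠ j ∧ f = yP K n i * yP K n j}

lemma yy_mem {i j : Fin n} (h : i ≠ j) : yP K n i * yP K n j ∈ YI K n :=
  Ideal.subset_span ⟨i, j, h, rfl⟩

variable (K n) in
noncomputable def LI : Ideal (MvPolynomial (Fin (n + 2)) K) :=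
  YI K n ⊔ Ideal.span {xP K n * zP K n}

variable (K) in
noncomputable def tau (k : Fin n) : MvPolynomial (Fin (n + 2)) K →ₐ[K] MvPolynomial (Fin (n + 2)) K :=
  sb (xP K n) (fun j => if j = k then yP K n j else 0) (zP K n)

variable (K n) in
noncomputable def tau0 : MvPolynomial (Fin (n + 2)) K →ₐ[K] MvPolynomial (Fin (n + 2)) K :=
  sb (xP K n) (fun _ => 0) (zP K n)

lemma tau_colon (j : Fin n) (p : MvPolynomial (Fin (n + 2)) K) :
    yP K n j * (p - tau K j p) ∈ YI K n := by
  refine sub_hom_mem (J := Submodule.comap (LinearMap.mulLeft _ (yP K n j)) (YI K n)) (tau K j)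
    (sb_cong ?_ ?_ ?_) p
  · rw [sub_self]; exact Submodule.zero_mem _
  · intro i
    split_ifs with h
    · rw [sub_self]; exact Submodule.zero_mem _
    · rw [sub_zero]; exact yy_mem (Ne.symm h)
  · rw [sub_self]; exact Submodule.zero_mem _

lemma incl_excl (f : MvPolynomial (Fin (n + 2)) K) :
    f - (tau0 K n f + ∑ k, (tau K k f - tau0 K n f)) ∈ YI K n := by
  induction f using MvPolynomial.induction_on with
  | C a => simp [tau, tau0, algebraMap_eq]
  | add p q hp hq =>
    have := Ideal.add_mem _ hp hq
    convert this using 1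
    simp only [map_add, Finset.sum_sub_distrib, Finset.sum_add_distrib]
    ring
  | mul_X p i hp =>
    revert i
    refine cases3 ?_ ?_ ?_
    · have := Ideal.mul_mem_right (xP K n) _ hp
      change p * xP K n - (tau0 K n (p * xP K n) +
        ∑ k, (tau K k (p * xP K n) - tau0 K n (p * xP K n))) ∈ _
      convert this using 1
      simp only [map_mul, tau, tau0, sb_x, ← sub_mul, ← Finset.sum_mul, ← add_mul]
    · intro j
      change p * yP K n j - (tau0 K n (p * yP K n j) +
        ∑ k, (tau K k (p * yP K n j) - tau0 K n (p * yP K n j))) ∈ _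
      convert tau_colon j p using 1
      have h0 : tau0 K n (yP K n j) = 0 := by rw [tau0, sb_y]
      have h1 : ∀ k, tau K k (yP K n j) = if j = k then yP K n j else 0 := fun k => by
        rw [tau, sb_y]
      simp only [map_mul, h0, h1, mul_zero, sub_zero, zero_add, mul_ite, Finset.sum_ite_eq,
        Finset.mem_univ, if_true]
      ring
    · have := Ideal.mul_mem_right (zP K n) _ hp
      change p * zP K n - (tau0 K n (p * zP K n) +
        ∑ k, (tau K k (p * zP K n) - tau0 K n (p * zP K n))) ∈ _
      convert this using 1
      simp only [map_mul, tau, tau0, sb_z, ← sub_mul, ← Finset.sum_mul, ← add_mul]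

lemma tau0_tau (k : Fin n) (f : MvPolynomial (Fin (n + 2)) K) : tau0 K n (tau K k f) = tau0 K n f := by
  have : (tau0 K n).comp (tau K k) = tau0 K n := by
    refine MvPolynomial.algHom_ext ?_
    refine cases3 ?_ ?_ ?_
    · change tau0 K n (tau K k (xP K n)) = tau0 K n (xP K n)
      simp [tau, tau0]
    · intro j
      change tau0 K n (tau K k (yP K n j)) = tau0 K n (yP K n j)
      rw [tau, sb_y]
      split_ifs
      · rfl
      · simp [tau0]
    · change tau0 K n (tau K k (zP K n)) = tau0 K n (zP K n)
      simp [tau, tau0]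
  exact DFunLike.congr_fun this f

lemma critY (hn : 1 ≤ n) {q : MvPolynomial (Fin (n + 2)) K} (hq0 : tau0 K n q = q)
    (hq : ∀ k, tau K k q = q) (f : MvPolynomial (Fin (n + 2)) K) :
    f ∈ YI K n ⊔ Ideal.span {q} ↔ ∀ k, q ∣ tau K k f := by
  constructor
  · intro hf k
    obtain ⟨j, hj, t, ht, rfl⟩ := Submodule.mem_sup.1 hf
    obtain ⟨s, rfl⟩ := Ideal.mem_span_singleton'.1 ht
    have : tau K k j = 0 := by
      refine ker_of_span _ ?_ j hj
      rintro _ ⟨a, b, hab, rfl⟩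
      rw [map_mul, tau, sb_y, sb_y]
      by_cases ha : a = k
      · rw [if_neg (c := b = k), mul_zero]
        rintro rfl; exact hab ha
      · rw [if_neg ha, zero_mul]
    rw [map_add, this, zero_add, map_mul, hq]
    exact dvd_mul_left _ _
  · intro h
    have h0 : q ∣ tau0 K n f := by
      obtain ⟨g, hg⟩ := h ⟨0, hn⟩
      rw [← tau0_tau ⟨0, hn⟩, hg, map_mul, hq0]
      exact dvd_mul_right _ _
    have h1 : q ∣ tau0 K n f + ∑ k, (tau K k f - tau0 K n f) :=
      dvd_add h0 (Finset.dvd_sum fun k _ => dvd_sub (h k) h0)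
    have := Submodule.add_mem_sup (incl_excl f) (Ideal.mem_span_singleton.2 h1)
    simpa using this

lemma regY (hn : 1 ≤ n) {q a : MvPolynomial (Fin (n + 2)) K} (hq0 : tau0 K n q = q)
    (hq : ∀ k, tau K k q = q) (ha : ∀ k, Prime (tau K k a)) (haq : ∀ k, ¬ tau K k a ∣ q) :
    Reg (YI K n ⊔ Ideal.span {q}) a := by
  intro f hf
  rw [critY hn hq0 hq] at hf ⊢
  intro k
  have := hf k
  rw [map_mul] at this
  exact dvd_of_prime (ha k) (haq k) this

lemma prime_zx : Prime (zP K n - xP K n) := by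
  have := prime_lin (K := K) (i := Fin.last (n + 1)) (j := 0) (by simp [Fin.ext_iff]) (-1)
  simpa [zP, xP, sub_eq_add_neg] using this

lemma prime_yx (k : Fin n) (α : K) : Prime (yP K n k + C α * xP K n) :=
  prime_lin (by simp [Fin.ext_iff]) α

lemma prime_x : Prime (xP K n) := X_prime
lemma prime_z : Prime (zP K n) := X_prime

lemma regL0 (hn : 1 ≤ n) (α : K) : Reg (LI K n) (ll K n α 0) := by
  have e : ∀ k, tau K k (zP K n - xP K n) = zP K n - xP K n := fun k => by simp [tau]
  refine regY hn (by simp [tau0]) (by simp [tau]) (fun k => ?_) (fun k => ?_)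
  · rw [ll, e]; exact prime_zx
  · rw [ll, e]
    exact not_dvd_of_eval (mk3 1 0 1) (by simp) (by simp)

lemma regL1 (hn : 1 ≤ n) (α : K) : Reg (LI K n ⊔ Ideal.span {ll K n α 0}) (ll K n α 1) := by
  set ρ : MvPolynomial (Fin (n + 2)) K →ₐ[K] MvPolynomial (Fin (n + 2)) K :=
    sb (xP K n) (yP K n) (xP K n) with hρ
  have h1 : ∀ f ∈ LI K n ⊔ Ideal.span {ll K n α 0}, ρ f ∈ YI K n ⊔ Ideal.span {xP K n ^ 2} := by
    have : LI K n ⊔ Ideal.span {ll K n α 0} ≤ (YI K n ⊔ Ideal.span {xP K n ^ 2}).comap ρ := by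
      refine sup_le (sup_le ?_ ?_) ?_
      · refine Ideal.span_le.2 ?_
        rintro _ ⟨i, j, hij, rfl⟩
        refine Ideal.mem_sup_left ?_
        rw [map_mul, hρ, sb_y, sb_y]; exact yy_mem hij
      · rw [Ideal.span_singleton_le_iff_mem]
        refine Ideal.mem_sup_right ?_
        rw [map_mul, hρ, sb_x, sb_z, ← sq]; exact Ideal.mem_span_singleton_self _
      · rw [Ideal.span_singleton_le_iff_mem, Ideal.mem_comap, ll, map_sub, hρ, sb_x, sb_z, sub_self]
        exact Ideal.zero_mem _
    exact fun f hf => this hf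
  have h2 : YI K n ⊔ Ideal.span {xP K n ^ 2} ≤ LI K n ⊔ Ideal.span {ll K n α 0} := by
    refine sup_le (le_sup_left.trans le_sup_left) ?_
    rw [Ideal.span_singleton_le_iff_mem, mem_sup_span]
    refine ⟨- xP K n, Ideal.mem_sup_right ?_⟩
    have : xP K n ^ 2 - -xP K n * ll K n α 0 = xP K n * zP K n := by rw [ll]; ring
    rw [this]; exact Ideal.mem_span_singleton_self _
  have h3 : ∀ f, f - ρ f ∈ LI K n ⊔ Ideal.span {ll K n α 0} := by
    refine sub_hom_mem ρ (sb_cong ?_ ?_ ?_)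
    · simp
    · simp
    · exact Ideal.mem_sup_right (Ideal.mem_span_singleton_self _)
  have hr : ρ (ll K n α 1) = ll K n α 1 := by
    simp [ll, hρ, algebraMap_eq]
  have ht : ∀ k, tau K k (ll K n α 1) = yP K n k + C α * xP K n := fun k => by
    simp [ll, tau, algebraMap_eq]
  have h4 : Reg (YI K n ⊔ Ideal.span {xP K n ^ 2}) (ll K n α 1) := by
    refine regY hn (by simp [tau0]) (by simp [tau]) (fun k => ?_) (fun k => ?_)
    · rw [ht]; exact prime_yx k α
    · rw [ht]
      exact not_dvd_of_eval (mk3 1 (fun _ => - α) 1) (by simp) (by simp)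
  intro f hf
  have := h1 _ hf
  rw [map_mul, hr] at this
  have := Ideal.add_mem _ (h3 f) (h2 (h4 _ this))
  simpa using this

lemma Js_two {σ : Type*} (l : ℕ → MvPolynomial σ K) :
    Js l 2 = Ideal.span {l 0} ⊔ Ideal.span {l 1} := by
  change (⊥ ⊔ Ideal.span {l 0}) ⊔ Ideal.span {l 1} = _
  rw [bot_sup_eq]

lemma m3_le (α : K) : idealOfVars (Fin (n + 2)) K ^ 3 ≤ LI K n ⊔ Js (ll K n α) 2 := by
  set A := LI K n ⊔ Js (ll K n α) 2 with hA
  have hzx : zP K n - xP K n ∈ A := Ideal.mem_sup_right (mem_Js (l := ll K n α) (i := 0) (by omega))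
  have hth : ∑ j, yP K n j + C α * xP K n ∈ A :=
    Ideal.mem_sup_right (mem_Js (l := ll K n α) (i := 1) (by omega))
  have hyy : ∀ i j, i ≠ j → yP K n i * yP K n j ∈ A := fun i j h =>
    Ideal.mem_sup_left (Ideal.mem_sup_left (yy_mem h))
  have hxz : xP K n * zP K n ∈ A :=
    Ideal.mem_sup_left (Ideal.mem_sup_right (Ideal.mem_span_singleton_self _))
  have hxx : xP K n * xP K n ∈ A := by
    have := A.sub_mem hxz (A.mul_mem_left (xP K n) hzx)
    convert this using 1; ring
  have hy2 : ∀ k, yP K n k * yP K n k + C α * xP K n * yP K n k ∈ A := by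
    intro k
    have h1 := A.mul_mem_left (yP K n k) hth
    have h2 := A.sum_mem (t := Finset.univ.erase k) (f := fun j => yP K n k * yP K n j)
      (fun j hj => hyy k j (Finset.ne_of_mem_erase hj).symm)
    have := A.sub_mem h1 h2
    convert this using 1
    rw [← Finset.add_sum_erase _ _ (Finset.mem_univ k), ← Finset.mul_sum]
    ring
  have hxy2 : ∀ k, xP K n * (yP K n k * yP K n k) ∈ A := by
    intro k
    have := A.sub_mem (A.mul_mem_left (xP K n) (hy2 k)) (A.mul_mem_left (C α * yP K n k) hxx)
    convert this using 1; ring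
  have hy3 : ∀ k, yP K n k * (yP K n k * yP K n k) ∈ A := by
    intro k
    have := A.sub_mem (A.mul_mem_left (yP K n k) (hy2 k)) (A.mul_mem_left (C α) (hxy2 k))
    convert this using 1; ring
  have hxyy : ∀ i j, xP K n * (yP K n i * yP K n j) ∈ A := by
    intro i j
    by_cases h : i = j
    · subst h; exact hxy2 i
    · exact A.mul_mem_left _ (hyy i j h)
  have hyyy : ∀ i j k, yP K n i * (yP K n j * yP K n k) ∈ A := by
    intro i j k
    by_cases h : j = k
    · subst h
      by_cases h : i = j
      · subst h; exact hy3 i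
      · have := A.mul_mem_left (yP K n j) (hyy i j h)
        convert this using 1; ring
    · exact A.mul_mem_left _ (hyy j k h)
  set e : Fin (n + 2) → MvPolynomial (Fin (n + 2)) K := mk3 (xP K n) (yP K n) (xP K n) with he
  have hV : ∀ i, e i = xP K n ∨ ∃ j, e i = yP K n j :=
    cases3 (Or.inl (mk3_x ..)) (fun j => Or.inr ⟨j, mk3_y ..⟩) (Or.inl (mk3_z ..))
  have hXe : ∀ i, (X i : MvPolynomial (Fin (n + 2)) K) - e i ∈ A := by
    refine cases3 ?_ ?_ ?_
    · rw [he, mk3_x, xP, sub_self]; exact A.zero_mem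
    · intro j; rw [he, mk3_y, yP, sub_self]; exact A.zero_mem
    · rw [he, mk3_z]; exact hzx
  have key : ∀ a b c, e a * (e b * e c) ∈ A := by
    intro a b c
    rcases hV a with h1 | ⟨i, h1⟩ <;> rcases hV b with h2 | ⟨j, h2⟩ <;>
      rcases hV c with h3 | ⟨k, h3⟩ <;> rw [h1, h2, h3]
    · exact A.mul_mem_left _ hxx
    · rw [← mul_assoc]; exact A.mul_mem_right _ hxx
    · rw [mul_left_comm]; exact A.mul_mem_left _ hxx
    · exact hxyy j k
    · exact A.mul_mem_left _ hxx
    · rw [mul_left_comm]; exact hxyy i k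
    · rw [mul_comm (yP K n j), mul_left_comm]; exact hxyy i j
    · exact hyyy i j k
  rw [idealOfVars, pow_three, Ideal.span_mul_span', Ideal.span_mul_span', Ideal.span_le]
  rintro _ ⟨_, ⟨a, rfl⟩, _, ⟨_, ⟨b, rfl⟩, _, ⟨c, rfl⟩, rfl⟩, rfl⟩
  change X a * (X b * X c) ∈ A
  have := A.add_mem (A.add_mem (A.add_mem (A.mul_mem_right (X b * X c) (hXe a))
    (A.mul_mem_right (e a * X c) (hXe b))) (A.mul_mem_right (e a * e b) (hXe c))) (key a b c)
  convert this using 1; ring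

end LIdeal


section Core

variable {K : Type*} [Field K] {n : ℕ}

theorem core {I Q : Ideal (MvPolynomial (Fin (n + 2)) K)} (hn : 1 ≤ n) (α : K) (hI : HI I)
    (hIL : I ≤ LI K n) (hLI : LI K n ≤ I ⊔ Ideal.span {xP K n * zP K n})
    (hwQ : ∀ g ∈ Q, xP K n * zP K n * g ∈ I) (hQw : ∀ g, xP K n * zP K n * g ∈ I → g ∈ Q)
    (hQ0 : Reg Q (ll K n α 0)) (hQ1 : Reg (Q ⊔ Ideal.span {ll K n α 0}) (ll K n α 1))
    (i0 : Fin (n + 2)) (c : Fin (n + 2) → K)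
    (hc : ∀ i, (X i : MvPolynomial (Fin (n + 2)) K) - C (c i) * X i0 ∈ Q ⊔ Js (ll K n α) 2)
    (hsq : (X i0 : MvPolynomial (Fin (n + 2)) K) * X i0 ∈ Q ⊔ Js (ll K n α) 2)
    (hi0 : (X i0 : MvPolynomial (Fin (n + 2)) K) ∉ Q ⊔ Js (ll K n α) 2)
    (F : MinGradedFreeRes K (Fin (n + 2)) I) : F.betti n (n + 3) = 1 := by
  set l := ll K n α with hl
  set w := xP K n * zP K n with hw
  have hwL : w ∈ LI K n := Ideal.mem_sup_right (Ideal.mem_span_singleton_self _)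
  obtain ⟨a1, a2, a3, a4⟩ := transfer_step hIL hLI hwQ hQw hwL (regL0 hn α)
  obtain ⟨b1, b2, b3, b4⟩ := transfer_step a1 a2 a3 a4 (Ideal.mem_sup_left hwL) (regL1 hn α)
  have e2 : ∀ J : Ideal (MvPolynomial (Fin (n + 2)) K),
      (J ⊔ Ideal.span {l 0}) ⊔ Ideal.span {l 1} = J ⊔ Js l 2 := fun J => by
    rw [Js_two, sup_assoc]
  rw [e2, e2] at b1 b2 b3 b4
  set I2 := I ⊔ Js l 2 with hI2
  set D := Q ⊔ Js l 2 with hD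
  have hwh : w.IsHomogeneous 2 := hom_x.mul hom_z
  have hI2h : HI I2 := HI_sup hI (HI_Js (hom_ll α) 2)
  have main : ∀ d, 1 ≤ d → ∀ f : MvPolynomial (Fin (n + 2)) K, f.IsHomogeneous (d + 2) →
      ∃ g : MvPolynomial (Fin (n + 2)) K, g.IsHomogeneous d ∧ f - g * w ∈ I2 := by
    intro d hd f hf
    have h3 : f ∈ idealOfVars (Fin (n + 2)) K ^ 3 :=
      Ideal.pow_le_pow_right (by omega) (hom_mem_pow hf)
    obtain ⟨g, hg⟩ := mem_sup_span.1 (b2 (m3_le α h3))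
    have h4 := hI2h 0 (d + 2) _ hg
    rw [map_sub, hcs_mul 2 0 (d + 2) g w, hcs_zero,
      homogeneousComponent_of_mem ((mem_homogeneousSubmodule _ _).2 hf), if_pos rfl] at h4
    · refine ⟨_, ?_, h4⟩
      rw [hcs, if_pos (by omega), Nat.add_sub_cancel]
      exact homogeneousComponent_isHomogeneous d g
    · intro m hm
      rw [mdeg_eq, add_zero, Finsupp.degree_eq_weight_one]
      exact hwh (mem_support_iff.1 hm)
  have hm2 : idealOfVars (Fin (n + 2)) K ^ 2 ≤ D := by
    rw [idealOfVars, pow_two, Ideal.span_mul_span', Ideal.span_le]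
    rintro _ ⟨_, ⟨a, rfl⟩, _, ⟨b, rfl⟩, rfl⟩
    change X a * X b ∈ D
    have := D.add_mem (D.add_mem (D.mul_mem_right (X b) (hc a))
      (D.mul_mem_left (C (c a) * X i0) (hc b))) (D.mul_mem_left (C (c a) * C (c b)) hsq)
    convert this using 1; ring
  have hlin : ∀ g : MvPolynomial (Fin (n + 2)) K, g.IsHomogeneous 1 → ∃ r : K, g - C r * X i0 ∈ D := by
    intro g hg
    have hg' := (mem_homogeneousSubmodule 1 g).2 hg
    rw [homogeneousSubmodule_one_eq_span_X] at hg'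
    induction hg' using Submodule.span_induction with
    | mem x hx => obtain ⟨i, rfl⟩ := hx; exact ⟨c i, hc i⟩
    | zero => exact ⟨0, by simp⟩
    | add x y hx hy ihx ihy =>
      rw [← homogeneousSubmodule_one_eq_span_X] at hx hy
      obtain ⟨r, hr⟩ := ihx hx
      obtain ⟨s, hs⟩ := ihy hy
      refine ⟨r + s, ?_⟩
      convert D.add_mem hr hs using 1
      rw [C_add]; ring
    | smul a x hx ihx =>
      rw [← homogeneousSubmodule_one_eq_span_X] at hx
      obtain ⟨r, hr⟩ := ihx hx
      refine ⟨a * r, ?_⟩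
      convert D.mul_mem_left (C a) hr using 1
      rw [C_mul, smul_eq_C_mul]; ring
  refine machine F n hI l (hom_ll α) (ll_reg α hn) (ll_max α hn)
    (reg_transfer hIL hLI hwQ hQw (regL0 hn α) hQ0) (reg_transfer a1 a2 a3 a4 (regL1 hn α) hQ1)
    (t := w * X i0) ?_ ?_ ?_ ?_
  · exact hwh.mul (isHomogeneous_X _ _)
  · exact fun h => hi0 (b4 _ h)
  · intro f hf
    obtain ⟨g, hg, hfg⟩ := main 1 le_rfl f hf
    obtain ⟨r, hr⟩ := hlin g hg
    refine ⟨r, ?_⟩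
    convert I2.add_mem hfg (b3 _ hr) using 1
    ring
  · rw [pow_idealOfVars_eq_span, Ideal.span_le]
    rintro _ ⟨m, hm, rfl⟩
    have hh : (monomial m (1 : K)).IsHomogeneous (2 + 2) := isHomogeneous_monomial _ hm
    obtain ⟨g, hg, hfg⟩ := main 2 (by omega) _ hh
    have := I2.add_mem hfg (b3 _ (hm2 (hom_mem_pow hg)))
    rwa [mul_comm, sub_add_cancel] at this

end Core


section Final

variable {K : Type*} [Field K] {n : ℕ}

lemma LI_coeff {f : MvPolynomial (Fin (n + 2)) K} (hf : f ∈ LI K n) : coeff 0 f = 0 := by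
  rw [← mem_vars_iff]
  have : LI K n ≤ idealOfVars (Fin (n + 2)) K := by
    refine sup_le (Ideal.span_le.2 ?_) ?_
    · rintro _ ⟨i, j, -, rfl⟩
      exact Ideal.mul_mem_left _ _ (Ideal.subset_span ⟨_, rfl⟩)
    · rw [Ideal.span_singleton_le_iff_mem]
      exact Ideal.mul_mem_left _ _ (Ideal.subset_span ⟨_, rfl⟩)
  exact this hf

/-- a linear functional detecting nontriviality of the socle generator -/
noncomputable def dn (a : K) (b : Fin n → K) (c : K) :
    MvPolynomial (Fin (n + 2)) K →ₐ[K] DualNumber K :=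
  sb (TrivSqZeroExt.inr a) (fun j => TrivSqZeroExt.inr (b j)) (TrivSqZeroExt.inr c)

lemma not_mem_of_dn {J : Ideal (MvPolynomial (Fin (n + 2)) K)} {f : MvPolynomial (Fin (n + 2)) K}
    (a : K) (b : Fin n → K) (c : K) (h : J ≤ RingHom.ker (dn a b c)) (hf : dn a b c f ≠ 0) :
    f ∉ J := fun h' => hf (h h')

lemma dn_Js (α : K) (a : K) (b : Fin n → K) (h : ∑ j, b j + α * a = 0) :
    Js (ll K n α) 2 ≤ RingHom.ker (dn a b a) := by
  refine Js_le fun i hi => ?_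
  rw [RingHom.mem_ker]
  match i with
  | 0 => simp [ll, dn]
  | 1 =>
    rw [ll, map_add, map_mul, map_sum]
    simp only [dn, sb_y, sb_x, sb_C]
    have : (algebraMap K (DualNumber K) α) = TrivSqZeroExt.inl α := rfl
    rw [this, TrivSqZeroExt.inl_mul_inr, ← TrivSqZeroExt.inr_sum, ← TrivSqZeroExt.inr_add,
      smul_eq_mul, h, TrivSqZeroExt.inr_zero]

lemma exists_third (hn : 3 ≤ n) (i j : Fin n) : ∃ k : Fin n, k ≠ i ∧ k ≠ j := by
  by_cases h0 : i.val ≠ 0 ∧ j.val ≠ 0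
  · exact ⟨⟨0, by omega⟩, fun h => h0.1 (by rw [← h]), fun h => h0.2 (by rw [← h])⟩
  by_cases h1 : i.val ≠ 1 ∧ j.val ≠ 1
  · exact ⟨⟨1, by omega⟩, fun h => h1.1 (by rw [← h]), fun h => h1.2 (by rw [← h])⟩
  refine ⟨⟨2, by omega⟩, fun h => ?_, fun h => ?_⟩
  · have := congrArg Fin.val h
    simp at this; omega
  · have := congrArg Fin.val h
    simp at this; omega

section Ini

lemma HI_ini (hn : 1 ≤ n) : HI (diamondIni K n hn) := by
  refine HI_span _ ?_
  rintro _ ((⟨i, j, -, rfl⟩ | ⟨k, -, rfl⟩) | rfl)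
  · exact ⟨_, (hom_y i).mul (hom_y j)⟩
  · exact ⟨_, (hom_x.mul (hom_y k)).mul hom_z⟩
  · exact ⟨_, (hom_x.mul ((hom_y _).pow 2)).mul hom_z⟩

lemma ini_yy (hn : 1 ≤ n) {i j : Fin n} (h : i ≠ j) :
    yP K n i * yP K n j ∈ diamondIni K n hn := by
  rcases lt_or_gt_of_ne h with h | h
  · exact Ideal.subset_span (Or.inl (Or.inl ⟨i, j, h, rfl⟩))
  · exact Ideal.subset_span (Or.inl (Or.inl ⟨j, i, h, mul_comm _ _⟩))

lemma ini_le (hn : 1 ≤ n) : diamondIni K n hn ≤ LI K n := by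
  have hw : xP K n * zP K n ∈ LI K n := Ideal.mem_sup_right (Ideal.mem_span_singleton_self _)
  refine Ideal.span_le.2 ?_
  rintro _ ((⟨i, j, h, rfl⟩ | ⟨k, -, rfl⟩) | rfl)
  · exact Ideal.mem_sup_left (yy_mem h.ne)
  · have := Ideal.mul_mem_right (yP K n k) _ hw
    rwa [mul_right_comm] at this
  · have := Ideal.mul_mem_right (yP K n ⟨n - 1, by omega⟩ ^ 2) _ hw
    rwa [mul_right_comm] at this

lemma ini_xyz (hn : 1 ≤ n) (k : Fin n) (hk : k.val < n - 1) :
    xP K n * zP K n * yP K n k ∈ diamondIni K n hn := by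
  rw [mul_right_comm]
  exact Ideal.subset_span (Or.inl (Or.inr ⟨k, hk, rfl⟩))

lemma ini_xyyz (hn : 1 ≤ n) :
    xP K n * zP K n * yP K n ⟨n - 1, by omega⟩ ^ 2 ∈ diamondIni K n hn := by
  rw [mul_right_comm]
  exact Ideal.subset_span (Or.inr (Set.mem_singleton _))

lemma lt_of_ne_last (hn : 1 ≤ n) (k : Fin n) (hk : k ≠ ⟨n - 1, by omega⟩) : k.val < n - 1 := by
  have h1 : k.val ≠ n - 1 := fun h => hk (Fin.ext h)
  have := k.2
  omega

/-- multiplication by `xz` maps the colon ideal into the initial ideal -/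
lemma ini_wQ (hn : 1 ≤ n) (s : Fin n) (hs : s = ⟨n - 1, by omega⟩) :
    ∀ g ∈ Ideal.span {f | ∃ k, k ≠ s ∧ f = yP K n k} ⊔ Ideal.span {yP K n s ^ 2},
      xP K n * zP K n * g ∈ diamondIni K n hn := by
  intro g hg
  obtain ⟨t, ht⟩ := mem_sup_span.1 hg
  have h1 : ∀ f ∈ Ideal.span {f | ∃ k, k ≠ s ∧ f = yP K n k},
      xP K n * zP K n * f ∈ diamondIni K n hn := by
    intro f hf
    induction hf using Submodule.span_induction with
    | mem f hf =>
      obtain ⟨k, hk, rfl⟩ := hf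
      exact ini_xyz hn k (lt_of_ne_last hn k (hs ▸ hk))
    | zero => rw [mul_zero]; exact Ideal.zero_mem _
    | add a b _ _ ha hb => rw [mul_add]; exact Ideal.add_mem _ ha hb
    | smul c a _ ha => rw [smul_eq_mul, mul_left_comm]; exact Ideal.mul_mem_left _ _ ha
  have h2 : xP K n * zP K n * yP K n s ^ 2 ∈ diamondIni K n hn := by
    rw [hs]; exact ini_xyyz hn
  have := Ideal.add_mem _ (h1 _ ht) (Ideal.mul_mem_left _ t h2)
  convert this using 1; ring

theorem ini_betti (hn : 1 ≤ n)
    (F : MinGradedFreeRes K (Fin (n + 2)) (diamondIni K n hn)) : F.betti n (n + 3) = 1 := by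
  set s : Fin n := ⟨n - 1, by omega⟩ with hs
  set P : Ideal (MvPolynomial (Fin (n + 2)) K) := Ideal.span {f | ∃ k, k ≠ s ∧ f = yP K n k} with hP
  have hPy : ∀ k, k ≠ s → yP K n k ∈ P := fun k hk => Ideal.subset_span ⟨k, hk, rfl⟩
  set q := yP K n s ^ 2 with hq
  set b : Fin n → MvPolynomial (Fin (n + 2)) K := fun j => if j = s then yP K n s else 0 with hb
  set φ : MvPolynomial (Fin (n + 2)) K →ₐ[K] MvPolynomial (Fin (n + 2)) K :=
    sb (xP K n) b (zP K n) with hφ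
  have hyb : ∀ j, yP K n j - b j ∈ P := by
    intro j
    rw [hb]
    by_cases h : j = s
    · simp [h]
    · simpa [h] using hPy j h
  have h1 : ∀ i, X i - φ (X i) ∈ P := sb_cong (by simp) hyb (by simp)
  have h2 : ∀ f ∈ P, φ f = 0 := by
    refine ker_of_span φ ?_
    rintro _ ⟨k, hk, rfl⟩
    simp [hφ, hb, hk]
  have hφq : φ q = q := by simp [hφ, hq, hb]
  set Q := P ⊔ Ideal.span {q} with hQ
  have hyQ : ∀ k, k ≠ s → yP K n k ∈ Q := fun k hk => Ideal.mem_sup_left (hPy k hk)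
  have hqQ : q ∈ Q := Ideal.mem_sup_right (Ideal.mem_span_singleton_self _)
  have hIQ : diamondIni K n hn ≤ Q := by
    refine Ideal.span_le.2 ?_
    rintro _ ((⟨i, j, h, rfl⟩ | ⟨k, hk, rfl⟩) | rfl)
    · by_cases hi : i = s
      · exact Q.mul_mem_left _ (hyQ j (by rintro rfl; exact h.ne hi))
      · exact Q.mul_mem_right _ (hyQ i hi)
    · refine Q.mul_mem_right _ (Q.mul_mem_left _ (hyQ k ?_))
      rintro rfl; simp [hs] at hk
    · exact Q.mul_mem_right _ (Q.mul_mem_left _ hqQ)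
  have hl0 : ll K n 1 0 ∈ Q ⊔ Js (ll K n 1) 2 :=
    Ideal.mem_sup_right (mem_Js (l := ll K n 1) (i := 0) (by omega))
  have hl1 : ll K n 1 1 ∈ Q ⊔ Js (ll K n 1) 2 :=
    Ideal.mem_sup_right (mem_Js (l := ll K n 1) (i := 1) (by omega))
  have hyx : yP K n s + xP K n ∈ Q ⊔ Js (ll K n 1) 2 := by
    have h2 := Ideal.sum_mem (Q ⊔ Js (ll K n 1) 2) (t := Finset.univ.erase s)
      (f := fun j => yP K n j)
      (fun j hj => Ideal.mem_sup_left (hyQ j (Finset.ne_of_mem_erase hj)))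
    have := Ideal.sub_mem _ hl1 h2
    convert this using 1
    rw [ll, ← Finset.add_sum_erase _ _ (Finset.mem_univ s), C_1]
    ring
  refine core hn 1 (HI_ini hn) (ini_le hn) ?_ (Q := Q) ?_ ?_ ?_ ?_ 0
    (mk3 1 (fun j => if j = s then -1 else 0) 1) ?_ ?_ ?_ F
  · refine sup_le ?_ le_sup_right
    refine Ideal.span_le.2 ?_
    rintro _ ⟨i, j, hij, rfl⟩
    exact Ideal.mem_sup_left (ini_yy hn hij)
  · exact ini_wQ hn s hs
  · intro g hg
    have h3 : xP K n * (zP K n * g) ∈ Q := by rw [← mul_assoc]; exact hIQ hg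
    have rx : Reg Q (xP K n) := by
      refine reg_q φ h1 h2 q ?_ ?_
      · rw [hφ, sb_x]; exact prime_x
      · rw [hφq, hφ, sb_x, hq]
        exact not_dvd_of_eval (mk3 0 1 0) (by simp) (by simp)
    have rz : Reg Q (zP K n) := by
      refine reg_q φ h1 h2 q ?_ ?_
      · rw [hφ, sb_z]; exact prime_z
      · rw [hφq, hφ, sb_z, hq]
        exact not_dvd_of_eval (mk3 0 1 0) (by simp) (by simp)
    exact rz _ (rx _ h3)
  · have e : φ (ll K n 1 0) = zP K n - xP K n := by simp [hφ, ll]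
    refine reg_q φ h1 h2 q ?_ ?_
    · rw [e]; exact prime_zx
    · rw [e, hφq, hq]
      exact not_dvd_of_eval (mk3 1 1 1) (by simp) (by simp)
  · rw [hQ, sup_assoc, sup_comm (Ideal.span {q}), ← sup_assoc]
    set φ' : MvPolynomial (Fin (n + 2)) K →ₐ[K] MvPolynomial (Fin (n + 2)) K :=
      sb (xP K n) b (xP K n) with hφ'
    have e : φ' (ll K n 1 1) = yP K n s + C 1 * xP K n := by
      simp [hφ', ll, hb]
    have e' : φ' q = q := by simp [hφ', hq, hb]
    refine reg_q φ' ?_ ?_ q ?_ ?_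
    · exact sb_cong (by simp) (fun j => Ideal.mem_sup_left (hyb j))
        (Ideal.mem_sup_right (Ideal.mem_span_singleton_self _))
    · have : P ⊔ Ideal.span {ll K n 1 0} ≤ RingHom.ker φ' := by
        refine sup_le (Ideal.span_le.2 ?_) ?_
        · rintro _ ⟨k, hk, rfl⟩
          simp [hφ', hb, hk, RingHom.mem_ker]
        · rw [Ideal.span_singleton_le_iff_mem]
          simp [hφ', ll, RingHom.mem_ker]
      exact fun f hf => this hf
    · rw [e]; exact prime_yx s 1
    · rw [e, e', hq]
      exact not_dvd_of_eval (mk3 (-1) 1 1) (by simp) (by simp)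
  · refine cases3 ?_ ?_ ?_
    · rw [mk3_x]; simp
    · intro j
      rw [mk3_y]
      by_cases h : j = s
      · rw [if_pos h, h]
        convert hyx using 1
        rw [yP, xP]; simp
      · rw [if_neg h, C_0, zero_mul, sub_zero]
        exact Ideal.mem_sup_left (hyQ j h)
    · rw [mk3_z, C_1, one_mul]; exact hl0
  · have := Ideal.add_mem _ (Ideal.mul_mem_right (xP K n - yP K n s) _ hyx)
      (Ideal.mem_sup_left (T := Js (ll K n 1) 2) hqQ)
    convert this using 1
    rw [hq]
    change xP K n * xP K n = _
    ring
  · refine not_mem_of_dn 1 (fun j => if j = s then -1 else 0) 1 ?_ ?_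
    · refine sup_le (sup_le (Ideal.span_le.2 ?_) ?_) (dn_Js _ _ _ (by simp))
      · rintro _ ⟨k, hk, rfl⟩
        simp [dn, hk, RingHom.mem_ker]
      · rw [Ideal.span_singleton_le_iff_mem]
        simp [dn, hq, RingHom.mem_ker, sq]
    · change dn 1 (fun j => if j = s then -1 else 0) 1 (xP K n) ≠ 0
      rw [dn, sb_x]
      intro h
      simpa using congrArg TrivSqZeroExt.snd h

end Ini

section Join

lemma HI_dia : HI (diamondIdeal K n) := by
  refine HI_span _ ?_
  rintro _ ⟨i, j, -, rfl⟩
  exact ⟨2, ((hom_y i).mul (hom_y j)).sub (hom_x.mul hom_z)⟩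

lemma dia_yy {i j : Fin n} (h : i ≠ j) :
    yP K n i * yP K n j - xP K n * zP K n ∈ diamondIdeal K n := by
  rcases lt_or_gt_of_ne h with h | h
  · exact Ideal.subset_span ⟨i, j, h, rfl⟩
  · exact Ideal.subset_span ⟨j, i, h, by rw [mul_comm (yP K n i)]⟩

lemma dia_le : diamondIdeal K n ≤ LI K n := by
  have hw : xP K n * zP K n ∈ LI K n := Ideal.mem_sup_right (Ideal.mem_span_singleton_self _)
  refine Ideal.span_le.2 ?_
  rintro _ ⟨i, j, h, rfl⟩
  exact Ideal.sub_mem _ (Ideal.mem_sup_left (yy_mem h.ne)) hw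

lemma dia_diff (hn : 3 ≤ n) (i j : Fin n) :
    xP K n * zP K n * (yP K n i - yP K n j) ∈ diamondIdeal K n := by
  by_cases h : i = j
  · subst h; simp
  obtain ⟨k, hi, hj⟩ := exists_third hn i j
  have := Ideal.sub_mem _ (Ideal.mul_mem_left _ (yP K n j) (dia_yy (K := K) hi))
    (Ideal.mul_mem_left _ (yP K n i) (dia_yy (K := K) hj))
  convert this using 1; ring

/-- everything except the choice of `α`. -/
theorem dia_aux (hn : 3 ≤ n) (s : Fin n) (α : K)
    (h1' : Prime ((n : MvPolynomial (Fin (n + 2)) K) * yP K n s + C α * xP K n))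
    (h2' : ¬ ((n : MvPolynomial (Fin (n + 2)) K) * yP K n s + C α * xP K n) ∣
      yP K n s ^ 2 - xP K n * xP K n)
    (i0 : Fin (n + 2)) (a b : K) (hab : n * b + α * a = 0) (hi0 : mk3 a (fun _ : Fin n => b) a i0 = 1)
    (hc : ∀ D : Ideal (MvPolynomial (Fin (n + 2)) K), (∀ i j, yP K n i - yP K n j ∈ D) →
      zP K n - xP K n ∈ D → yP K n s ^ 2 - xP K n * zP K n ∈ D →
      ∑ j, yP K n j + C α * xP K n ∈ D →
      (xP K n - C a * X i0 ∈ D ∧ yP K n s - C b * X i0 ∈ D ∧ X i0 * X i0 ∈ D))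
    (F : MinGradedFreeRes K (Fin (n + 2)) (diamondIdeal K n)) : F.betti n (n + 3) = 1 := by
  set P : Ideal (MvPolynomial (Fin (n + 2)) K) :=
    Ideal.span {f | ∃ i j, f = yP K n i - yP K n j} with hP
  have hPy : ∀ i j, yP K n i - yP K n j ∈ P := fun i j => Ideal.subset_span ⟨i, j, rfl⟩
  set q := yP K n s ^ 2 - xP K n * zP K n with hq
  set φ : MvPolynomial (Fin (n + 2)) K →ₐ[K] MvPolynomial (Fin (n + 2)) K :=
    sb (xP K n) (fun _ => yP K n s) (zP K n) with hφ
  have h1 : ∀ i, X i - φ (X i) ∈ P := sb_cong (by simp) (fun j => hPy j s) (by simp)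
  have h2 : ∀ f ∈ P, φ f = 0 := by
    refine ker_of_span φ ?_
    rintro _ ⟨i, j, rfl⟩
    simp [hφ]
  have hφq : φ q = q := by simp [hφ, hq]
  set Q := P ⊔ Ideal.span {q} with hQ
  have hqQ : q ∈ Q := Ideal.mem_sup_right (Ideal.mem_span_singleton_self _)
  have hIQ : diamondIdeal K n ≤ Q := by
    refine Ideal.span_le.2 ?_
    rintro _ ⟨i, j, h, rfl⟩
    change _ ∈ Q
    rw [hQ, crit_q φ h1 h2, hφq]
    simp [hφ, hq, sq]
  set D := Q ⊔ Js (ll K n α) 2 with hD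
  have hyD : ∀ i j, yP K n i - yP K n j ∈ D := fun i j =>
    Ideal.mem_sup_left (Ideal.mem_sup_left (hPy i j))
  have hl0 : zP K n - xP K n ∈ D := Ideal.mem_sup_right (mem_Js (l := ll K n α) (i := 0) (by omega))
  obtain ⟨c1, c2, c3⟩ := hc D hyD hl0 (Ideal.mem_sup_left hqQ)
    (Ideal.mem_sup_right (mem_Js (l := ll K n α) (i := 1) (by omega)))
  refine core (by omega) α HI_dia dia_le ?_ (Q := Q) ?_ ?_ ?_ ?_ i0
    (mk3 a (fun _ => b) a) ?_ c3 ?_ F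
  · refine sup_le ?_ le_sup_right
    refine Ideal.span_le.2 ?_
    rintro _ ⟨i, j, hij, rfl⟩
    refine mem_sup_span.2 ⟨1, ?_⟩
    rw [one_mul]; exact dia_yy hij
  · have : Q ≤ Submodule.comap (LinearMap.mulLeft _ (xP K n * zP K n)) (diamondIdeal K n) := by
      refine sup_le (Ideal.span_le.2 ?_) ?_
      · rintro _ ⟨i, j, rfl⟩
        exact dia_diff hn i j
      · rw [Ideal.span_singleton_le_iff_mem]
        change xP K n * zP K n * q ∈ diamondIdeal K n
        obtain ⟨k, hk, -⟩ := exists_third hn s s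
        have := Ideal.add_mem _ (Ideal.mul_mem_left _ (yP K n s) (dia_diff (K := K) hn s k))
          (Ideal.mul_mem_left _ (xP K n * zP K n) (dia_yy (K := K) hk))
        convert this using 1
        rw [hq]; ring
    exact fun g hg => this hg
  · intro g hg
    have h3 : xP K n * (zP K n * g) ∈ Q := by rw [← mul_assoc]; exact hIQ hg
    have rx : Reg Q (xP K n) := by
      refine reg_q φ h1 h2 q ?_ ?_
      · rw [hφ, sb_x]; exact prime_x
      · rw [hφq, hφ, sb_x, hq]
        exact not_dvd_of_eval (mk3 0 1 0) (by simp) (by simp)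
    have rz : Reg Q (zP K n) := by
      refine reg_q φ h1 h2 q ?_ ?_
      · rw [hφ, sb_z]; exact prime_z
      · rw [hφq, hφ, sb_z, hq]
        exact not_dvd_of_eval (mk3 0 1 0) (by simp) (by simp)
    exact rz _ (rx _ h3)
  · have e : φ (ll K n α 0) = zP K n - xP K n := by simp [hφ, ll]
    refine reg_q φ h1 h2 q ?_ ?_
    · rw [e]; exact prime_zx
    · rw [e, hφq, hq]
      exact not_dvd_of_eval (mk3 1 0 1) (by simp) (by simp)
  · rw [hQ, sup_assoc, sup_comm (Ideal.span {q}), ← sup_assoc]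
    set φ' : MvPolynomial (Fin (n + 2)) K →ₐ[K] MvPolynomial (Fin (n + 2)) K :=
      sb (xP K n) (fun _ => yP K n s) (xP K n) with hφ'
    have e : φ' (ll K n α 1) = (n : MvPolynomial (Fin (n + 2)) K) * yP K n s + C α * xP K n := by
      simp [hφ', ll, algebraMap_eq]
    have e' : φ' q = yP K n s ^ 2 - xP K n * xP K n := by simp [hφ', hq]
    refine reg_q φ' ?_ ?_ q ?_ ?_
    · exact sb_cong (by simp) (fun j => Ideal.mem_sup_left (hPy j s))
        (Ideal.mem_sup_right (Ideal.mem_span_singleton_self _))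
    · have : P ⊔ Ideal.span {ll K n α 0} ≤ RingHom.ker φ' := by
        refine sup_le (Ideal.span_le.2 ?_) ?_
        · rintro _ ⟨i, j, rfl⟩
          simp [hφ', RingHom.mem_ker]
        · rw [Ideal.span_singleton_le_iff_mem]
          simp [hφ', ll, RingHom.mem_ker]
      exact fun f hf => this hf
    · rw [e]; exact h1'
    · rw [e, e']; exact h2'
  · refine cases3 ?_ ?_ ?_
    · rw [mk3_x]; exact c1
    · intro j
      rw [mk3_y]
      have := D.add_mem (hyD j s) c2
      convert this using 1
      rw [yP]; ring
    · rw [mk3_z]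
      have := D.add_mem hl0 c1
      convert this using 1
      rw [zP]; ring
  · refine not_mem_of_dn a (fun _ => b) a ?_ ?_
    · refine sup_le (sup_le (Ideal.span_le.2 ?_) ?_) (dn_Js _ _ _ (by simpa using hab))
      · rintro _ ⟨i, j, rfl⟩
        simp [dn, RingHom.mem_ker]
      · rw [Ideal.span_singleton_le_iff_mem]
        simp [dn, hq, RingHom.mem_ker, sq]
    · have : ∀ i, dn a (fun _ : Fin n => b) a (X i) =
          TrivSqZeroExt.inr (mk3 a (fun _ : Fin n => b) a i) := by
        refine cases3 ?_ ?_ ?_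
        · rw [mk3_x]; exact sb_x ..
        · intro j; rw [mk3_y]; exact sb_y ..
        · rw [mk3_z]; exact sb_z ..
      rw [this, hi0]
      intro h
      simpa using congrArg TrivSqZeroExt.snd h

theorem dia_betti (hn : 3 ≤ n)
    (F : MinGradedFreeRes K (Fin (n + 2)) (diamondIdeal K n)) : F.betti n (n + 3) = 1 := by
  set s : Fin n := ⟨0, by omega⟩ with hs
  have hnC : (n : MvPolynomial (Fin (n + 2)) K) = C (n : K) := by simp
  have hsum : ∑ j, yP K n j = ∑ j, (yP K n j - yP K n s) + C (n : K) * yP K n s := by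
    rw [Finset.sum_sub_distrib]; simp
  by_cases h : (n : K) = 0
  · refine dia_aux hn s 1 ?_ ?_ s.succ.castSucc 0 1 (by simp [h]) (mk3_y ..) ?_ F
    · rw [hnC, h]; simpa using prime_x
    · rw [hnC, h]
      exact not_dvd_of_eval (mk3 0 1 0) (by simp) (by simp)
    · intro D d1 d2 d3 d4
      have hx : xP K n ∈ D := by
        have := D.sub_mem d4 (D.sum_mem (t := Finset.univ) fun j _ => d1 j s)
        rw [hsum, h] at this
        simpa using this
      refine ⟨by simpa using hx, by simp [yP], ?_⟩
      change yP K n s * yP K n s ∈ D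
      have := D.add_mem d3 (D.mul_mem_right (zP K n) hx)
      convert this using 1; ring
  · refine dia_aux hn s 0 ?_ ?_ 0 1 0 (by simp) (mk3_x ..) ?_ F
    · have hu : IsUnit (C (n : K) : MvPolynomial (Fin (n + 2)) K) := (isUnit_iff_ne_zero.2 h).map C
      have hp : Prime (yP K n s) := X_prime
      rw [hnC, C_0, zero_mul, add_zero, mul_comm]
      exact (associated_mul_unit_right _ _ hu).prime hp
    · exact not_dvd_of_eval (mk3 1 0 1) (by simp) (by simp)
    · intro D d1 d2 d3 d4
      have hy : yP K n s ∈ D := by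
        have := D.sub_mem d4 (D.sum_mem (t := Finset.univ) fun j _ => d1 j s)
        rw [hsum] at this
        have := D.mul_mem_left (C ((n : K)⁻¹)) this
        convert this using 1
        rw [C_0, zero_mul, add_zero, add_sub_cancel_left, ← mul_assoc, ← C_mul, inv_mul_cancel₀ h,
          C_1, one_mul]
      refine ⟨by simp [xP], by simpa using hy, ?_⟩
      change xP K n * xP K n ∈ D
      have := D.sub_mem (D.sub_mem (D.mul_mem_left (yP K n s) hy) d3)
        (D.mul_mem_left (xP K n) d2)
      convert this using 1; ring

end Join

end Final


end Diamond

theorem diamond_betti_top (K : Type*) [Field K] (n : ℕ) (hn : 3 ≤ n) :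
    (Nonempty (MinGradedFreeRes K (Fin (n + 2)) (diamondIdeal K n)) ∧
      ∀ F : MinGradedFreeRes K (Fin (n + 2)) (diamondIdeal K n), F.betti n (n + 3) = 1) ∧
    (Nonempty (MinGradedFreeRes K (Fin (n + 2)) (diamondIni K n (by omega))) ∧
      ∀ F : MinGradedFreeRes K (Fin (n + 2)) (diamondIni K n (by omega)),
        F.betti n (n + 3) = 1) := by
  refine ⟨⟨?_, fun F => Diamond.dia_betti hn F⟩, ⟨?_, fun F => Diamond.ini_betti _ F⟩⟩
  · exact Diamond.exists_res _ Diamond.HI_dia fun f hf => Diamond.LI_coeff (Diamond.dia_le hf)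
  · exact Diamond.exists_res _ (Diamond.HI_ini _) fun f hf =>
      Diamond.LI_coeff (Diamond.ini_le _ hf)
end

section
/- For n ≥ 3, the graded Betti number β_{n,n+1}(S/in_<(I)) equals 0, where in_<(I) = (y_i y_j : 1 ≤ i < j ≤ n) + (x y_k z : 1 ≤ k ≤ n−1) + (x y_n² z) in S = K[x, y_1, …, y_n, z]. -/
open MvPolynomial

namespace DiamondAux

lemma mdeg_eq_degree {σ : Type*} (m : σ →₀ ℕ) : mdeg m = m.degree := by
  rw [Finsupp.degree_apply]
  rfl

lemma mdeg_add {σ : Type*} (a b : σ →₀ ℕ) : mdeg (a + b) = mdeg a + mdeg b := by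
  simp [mdeg_eq_degree]

lemma mdeg_single {σ : Type*} (v : σ) (k : ℕ) : mdeg (Finsupp.single v k) = k := by
  simp [mdeg_eq_degree]

lemma mdeg_eq_zero {σ : Type*} (a : σ →₀ ℕ) : mdeg a = 0 ↔ a = 0 := by
  simp [mdeg_eq_degree, Finsupp.degree_eq_zero_iff]

lemma mdeg_eq_one {σ : Type*} (a : σ →₀ ℕ) (h : mdeg a = 1) : ∃ v, a = Finsupp.single v 1 := by
  have hne : a ≠ 0 := by
    rintro rfl
    simp [mdeg] at h
  obtain ⟨v, hv⟩ := Finsupp.ne_iff.mp hne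
  have hle : Finsupp.single v 1 ≤ a := by
    rw [Finsupp.single_le_iff]
    simp at hv
    omega
  obtain ⟨b, rfl⟩ := exists_add_of_le hle
  rw [mdeg_add, mdeg_single] at h
  have : b = 0 := by rw [← mdeg_eq_zero]; omega
  exact ⟨v, by simp [this]⟩

lemma single_add_eq {σ : Type*} {a b v w : σ}
    (h : (Finsupp.single a 1 + Finsupp.single b 1 : σ →₀ ℕ) = Finsupp.single v 1 + Finsupp.single w 1) :
    (a = v ∧ b = w) ∨ (a = w ∧ b = v) := by
  classical
  have h1 := DFunLike.congr_fun h a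
  have h2 := DFunLike.congr_fun h b
  have h3 := DFunLike.congr_fun h v
  have h4 := DFunLike.congr_fun h w
  simp only [Finsupp.add_apply, Finsupp.single_apply] at h1 h2 h3 h4
  grind

/-- coefficient of a quadratic monomial in a product of two polynomials without constant term -/
lemma coeff_mul_ne {K σ : Type*} [Field K] (f g : MvPolynomial σ K) (hf : coeff 0 f = 0)
    (hg : coeff 0 g = 0) {v w : σ} (hvw : v ≠ w) :
    coeff (Finsupp.single v 1 + Finsupp.single w 1) (f * g) =
      coeff (Finsupp.single v 1) f * coeff (Finsupp.single w 1) g +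
      coeff (Finsupp.single w 1) f * coeff (Finsupp.single v 1) g := by
  classical
  rw [coeff_mul]
  have hne : ((Finsupp.single v 1, Finsupp.single w 1) : (σ →₀ ℕ) × (σ →₀ ℕ)) ≠
      (Finsupp.single w 1, Finsupp.single v 1) := by
    intro h
    exact hvw (Finsupp.single_left_injective one_ne_zero (Prod.ext_iff.mp h).1)
  rw [← Finset.sum_pair (f := fun x : (σ →₀ ℕ) × (σ →₀ ℕ) => coeff x.1 f * coeff x.2 g) hne]
  symm
  apply Finset.sum_subset
  · intro x hx
    simp only [Finset.mem_insert, Finset.mem_singleton] at hx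
    rw [Finset.HasAntidiagonal.mem_antidiagonal]
    rcases hx with rfl | rfl
    · rfl
    · exact add_comm _ _
  · rintro ⟨m1, m2⟩ hx hn
    rw [Finset.HasAntidiagonal.mem_antidiagonal] at hx
    simp only at hx ⊢
    by_cases h1 : m1 = 0
    · simp [h1, hf]
    by_cases h2 : m2 = 0
    · simp [h2, hg]
    exfalso
    have hd := congrArg mdeg hx
    rw [mdeg_add, mdeg_add, mdeg_single, mdeg_single] at hd
    rw [← mdeg_eq_zero] at h1 h2
    obtain ⟨a, rfl⟩ := mdeg_eq_one m1 (by omega)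
    obtain ⟨b, rfl⟩ := mdeg_eq_one m2 (by omega)
    apply hn
    rcases single_add_eq hx with ⟨rfl, rfl⟩ | ⟨rfl, rfl⟩ <;> simp

lemma coeff_mul_self {K σ : Type*} [Field K] (f g : MvPolynomial σ K) (hf : coeff 0 f = 0)
    (hg : coeff 0 g = 0) (v : σ) :
    coeff (Finsupp.single v 1 + Finsupp.single v 1) (f * g) =
      coeff (Finsupp.single v 1) f * coeff (Finsupp.single v 1) g := by
  classical
  rw [coeff_mul]
  rw [Finset.sum_eq_single (Finsupp.single v 1, Finsupp.single v 1)]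
  · rintro ⟨m1, m2⟩ hx hn
    rw [Finset.HasAntidiagonal.mem_antidiagonal] at hx
    simp only at hx ⊢
    by_cases h1 : m1 = 0
    · simp [h1, hf]
    by_cases h2 : m2 = 0
    · simp [h2, hg]
    exfalso
    have hd := congrArg mdeg hx
    rw [mdeg_add, mdeg_add, mdeg_single] at hd
    rw [← mdeg_eq_zero] at h1 h2
    obtain ⟨a, rfl⟩ := mdeg_eq_one m1 (by omega)
    obtain ⟨b, rfl⟩ := mdeg_eq_one m2 (by omega)
    apply hn
    rcases single_add_eq hx with ⟨rfl, rfl⟩ | ⟨rfl, rfl⟩ <;> simp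
  · intro h
    rw [Finset.HasAntidiagonal.mem_antidiagonal] at h
    exact absurd rfl h

/-- coefficient of a cubic monomial, second factor in an ideal whose quadrics are
squarefree in the variables `Y` -/
lemma coeff_mul_cubic {K σ : Type*} [Field K] (Y : Set σ) (f g : MvPolynomial σ K)
    (hf : coeff 0 f = 0)
    (hg1 : ∀ m, coeff m g ≠ 0 → 2 ≤ mdeg m)
    (hg2 : ∀ m, coeff m g ≠ 0 → mdeg m = 2 →
      ∃ p q, p ≠ q ∧ p ∈ Y ∧ q ∈ Y ∧ m = Finsupp.single p 1 + Finsupp.single q 1)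
    {v p q : σ} (hpq : p ≠ q) (hv : v ∉ Y ∨ v = p ∨ v = q) :
    coeff (Finsupp.single v 1 + (Finsupp.single p 1 + Finsupp.single q 1)) (f * g) =
      coeff (Finsupp.single v 1) f * coeff (Finsupp.single p 1 + Finsupp.single q 1) g := by
  classical
  rw [coeff_mul]
  rw [Finset.sum_eq_single (Finsupp.single v 1, Finsupp.single p 1 + Finsupp.single q 1)]
  · rintro ⟨m1, m2⟩ hx hn
    rw [Finset.HasAntidiagonal.mem_antidiagonal] at hx
    simp only at hx ⊢
    by_cases h1 : m1 = 0
    · simp [h1, hf]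
    by_cases h2 : coeff m2 g = 0
    · simp [h2]
    exfalso
    have hd := congrArg mdeg hx
    rw [mdeg_add, mdeg_add, mdeg_add, mdeg_single, mdeg_single, mdeg_single] at hd
    rw [← mdeg_eq_zero] at h1
    have h3 := hg1 _ h2
    obtain ⟨a, rfl⟩ := mdeg_eq_one m1 (by omega)
    obtain ⟨b, c, hbc, hb, hc, rfl⟩ := hg2 _ h2 (by omega)
    apply hn
    have hav : a = v := by
      have e1 := DFunLike.congr_fun hx v
      have e2 := DFunLike.congr_fun hx p
      have e3 := DFunLike.congr_fun hx q
      simp only [Finsupp.add_apply, Finsupp.single_apply] at e1 e2 e3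
      grind
    subst hav
    rw [add_right_inj] at hx
    rw [hx]
  · intro h
    rw [Finset.HasAntidiagonal.mem_antidiagonal] at h
    exact absurd rfl h

section vanish

variable {K : Type*} [Field K] {σ : Type*} {I : Ideal (MvPolynomial σ K)}
  (F : MinGradedFreeRes K σ I)

noncomputable instance (i : ℕ) : Fintype (F.B i) := by
  have := F.finB i
  exact Fintype.ofFinite _

/-- entries of the differential -/
noncomputable def ent (i : ℕ) (b : F.B (i + 1)) (c : F.B i) : MvPolynomial σ K :=
  F.d i (Finsupp.single b 1) c

/-- linear parts of the entries -/
noncomputable def A (i : ℕ) (v : σ) : Matrix (F.B (i + 1)) (F.B i) K :=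
  fun b c => coeff (Finsupp.single v 1) (ent F i b c)

lemma lin_apply {B : Type} [Fintype B] {M : Type*} [AddCommGroup M] [Module (MvPolynomial σ K) M]
    (L : (B →₀ MvPolynomial σ K) →ₗ[MvPolynomial σ K] M) (f : B →₀ MvPolynomial σ K) :
    L f = ∑ b, f b • L (Finsupp.single b 1) := by
  conv_lhs => rw [← Finsupp.univ_sum_single f]
  rw [map_sum]
  refine Finset.sum_congr rfl fun b _ => ?_
  rw [← map_smul]
  simp

lemma d_apply (i : ℕ) (f : F.B (i + 1) →₀ MvPolynomial σ K) (c : F.B i) :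
    F.d i f c = ∑ b, f b * ent F i b c := by
  rw [lin_apply (F.d i) f, Finsupp.finsetSum_apply]
  rfl

lemma d_const (i : ℕ) (f : F.B (i + 1) →₀ MvPolynomial σ K) (c : F.B i) :
    coeff 0 (F.d i f c) = 0 := by
  rw [d_apply, coeff_sum]
  refine Finset.sum_eq_zero fun b _ => ?_
  have : coeff 0 (ent F i b c) = 0 := F.minimal i b c
  rw [← constantCoeff_eq] at this ⊢
  simp [this]

lemma dd (i : ℕ) (f : F.B (i + 1 + 1) →₀ MvPolynomial σ K) : F.d i (F.d (i + 1) f) = 0 := by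
  have : F.d (i + 1) f ∈ LinearMap.ker (F.d i) := by
    rw [← F.exact i]
    exact ⟨f, rfl⟩
  exact this

lemma ent_sum (i : ℕ) (b : F.B (i + 1 + 1)) (e : F.B i) :
    ∑ c, ent F (i + 1) b c * ent F i c e = 0 := by
  have := d_apply F i (F.d (i + 1) (Finsupp.single b 1)) e
  rw [dd] at this
  exact this.symm

lemma A_anti (i : ℕ) {v w : σ} (h : v ≠ w) :
    A F (i + 1) v * A F i w = - (A F (i + 1) w * A F i v) := by
  rw [eq_neg_iff_add_eq_zero]
  ext b e
  have := congrArg (coeff (Finsupp.single v 1 + Finsupp.single w 1)) (ent_sum F i b e)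
  rw [coeff_sum, coeff_zero, Finset.sum_congr rfl fun c _ => coeff_mul_ne (ent F (i + 1) b c)
    (ent F i c e)
    (F.minimal (i + 1) b c) (F.minimal i c e) h, Finset.sum_add_distrib] at this
  exact this

lemma A_sq (i : ℕ) (v : σ) : A F (i + 1) v * A F i v = 0 := by
  ext b e
  have := congrArg (coeff (Finsupp.single v 1 + Finsupp.single v 1)) (ent_sum F i b e)
  rw [coeff_sum, coeff_zero, Finset.sum_congr rfl fun c _ => coeff_mul_self (ent F (i + 1) b c)
    (ent F i c e)
    (F.minimal (i + 1) b c) (F.minimal i c e) v] at this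
  exact this

/-- images of the generators of `F_1` in the ideal -/
noncomputable def gen (c : F.B 1) : MvPolynomial σ K := F.ε (F.d 0 (Finsupp.single c 1))

lemma gen_mem (c : F.B 1) : gen F c ∈ I := by
  have : F.d 0 (Finsupp.single c 1) ∈ Submodule.comap F.ε (I : Submodule _ _) := by
    rw [← F.exact0]
    exact ⟨_, rfl⟩
  exact this

noncomputable def a (p q : σ) : F.B 1 → K :=
  fun c => coeff (Finsupp.single p 1 + Finsupp.single q 1) (gen F c)

variable (Y : Set σ) (hI1 : ∀ f ∈ I, ∀ m, coeff m f ≠ 0 → 2 ≤ mdeg m)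
  (hI2 : ∀ f ∈ I, ∀ m, coeff m f ≠ 0 → mdeg m = 2 →
      ∃ p q, p ≠ q ∧ p ∈ Y ∧ q ∈ Y ∧ m = Finsupp.single p 1 + Finsupp.single q 1)

include hI1 hI2 in
lemma A_a {v p q : σ} (hpq : p ≠ q) (hv : v ∉ Y ∨ v = p ∨ v = q) :
    (A F 1 v).mulVec (a F p q) = 0 := by
  ext b
  have h := congrArg F.ε (dd F 0 (Finsupp.single b 1))
  rw [map_zero] at h
  have h2 := lin_apply (F.ε ∘ₗ F.d 0) (F.d 1 (Finsupp.single b 1))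
  rw [LinearMap.comp_apply] at h2
  have h3 := h.symm.trans h2
  change 0 = ∑ c, ent F 1 b c * gen F c at h3
  have h4 := congrArg (coeff (Finsupp.single v 1 + (Finsupp.single p 1 + Finsupp.single q 1))) h3
  rw [coeff_sum, coeff_zero] at h4
  rw [Finset.sum_congr rfl fun c _ => coeff_mul_cubic Y (ent F 1 b c) (gen F c)
    (F.minimal 1 b c) (hI1 _ (gen_mem F c)) (hI2 _ (gen_mem F c)) hpq hv] at h4
  exact h4.symm

/-- constant vectors -/
noncomputable def cst {B : Type} [Fintype B] (u : B → K) : B →₀ MvPolynomial σ K :=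
  Finsupp.equivFunOnFinite.symm fun b => C (u b)

lemma d_inj (i : ℕ) (u : F.B (i + 1) → K) (h : F.d i (cst u) = 0) : u = 0 := by
  have : cst u ∈ LinearMap.ker (F.d i) := h
  rw [← F.exact i] at this
  obtain ⟨t, ht⟩ := this
  ext b
  have := d_const F (i + 1) t b
  rw [ht] at this
  simpa [cst] using this

include hI1 in
lemma B0 : ∃ c0 : F.B 0, ∃ r : K, r ≠ 0 ∧ F.deg 0 c0 = 0 ∧ (∀ c, c = c0) ∧
    ∀ f, F.ε f = C r * f c0 := by
  classical
  obtain ⟨t, ht⟩ := F.surj 1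
  have h0 : coeff 0 (F.ε t - 1) = 0 := by
    by_contra h
    have := hI1 _ ht 0 h
    simp [mdeg] at this
  rw [coeff_sub, coeff_zero_one, sub_eq_zero, lin_apply F.ε t, coeff_sum] at h0
  obtain ⟨c0, -, hc0⟩ : ∃ c ∈ Finset.univ, coeff 0 (t c • F.ε (Finsupp.single c 1)) ≠ 0 := by
    apply Finset.exists_ne_zero_of_sum_ne_zero
    rw [h0]
    exact one_ne_zero
  rw [← constantCoeff_eq, smul_eq_mul, map_mul] at hc0
  have hc1 := right_ne_zero_of_mul hc0
  rw [constantCoeff_eq] at hc1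
  have hd : F.deg 0 c0 = 0 := by
    have := F.ε_homog c0 hc1
    simpa using this.symm
  have hh := F.ε_homog c0
  rw [hd] at hh
  have hC : F.ε (Finsupp.single c0 1) = C (coeff 0 (F.ε (Finsupp.single c0 1))) := by
    rw [← totalDegree_eq_zero_iff_eq_C]
    exact Nat.le_zero.mp hh.totalDegree_le
  set r := coeff 0 (F.ε (Finsupp.single c0 1)) with hr
  have huniq : ∀ c, c = c0 := by
    intro c
    by_contra hne
    have hk : F.ε (Finsupp.single c 1 - (C r⁻¹ * F.ε (Finsupp.single c 1)) • Finsupp.single c0 1)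
        = 0 := by
      rw [map_sub, map_smul, hC, smul_eq_mul, mul_right_comm, ← C_mul, inv_mul_cancel₀ hc1]
      simp
    have hm : (Finsupp.single c 1 - (C r⁻¹ * F.ε (Finsupp.single c 1)) • Finsupp.single c0 1)
        ∈ LinearMap.range (F.d 0) := by
      rw [F.exact0, Submodule.mem_comap, hk]
      exact zero_mem _
    obtain ⟨t, ht⟩ := hm
    have := d_const F 0 t c
    rw [ht] at this
    simp [Ne.symm hne] at this
  refine ⟨c0, r, hc1, hd, huniq, fun f => ?_⟩
  have : f = f c0 • Finsupp.single c0 1 := by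
    ext1 c
    rw [huniq c]
    simp
  conv_lhs => rw [this]
  rw [map_smul, hC, smul_eq_mul, mul_comm]

include hI1 in
lemma deg_ge (i : ℕ) (b : F.B (i + 1)) : i + 2 ≤ F.deg (i + 1) b := by
  classical
  have key : ∀ i (b : F.B (i + 1)), ∃ c m, coeff m (ent F i b c) ≠ 0 := by
    intro i b
    by_contra! h
    have : (Pi.single b 1 : F.B (i + 1) → K) = 0 := by
      apply d_inj
      ext c m
      have : cst (σ := σ) (Pi.single b 1 : F.B (i + 1) → K) = Finsupp.single b 1 := by
        ext1 b'
        by_cases hb : b' = b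
        · subst hb; simp [cst]
        · simp [cst, hb]
      rw [this]
      exact h c m
    simpa using congrFun this b
  induction i with
  | zero =>
    obtain ⟨c0, r, hr, hd, hu, hε⟩ := B0 F hI1
    obtain ⟨c, m, hm⟩ := key 0 b
    obtain rfl := hu c
    have h1 := gen_mem F b
    rw [gen, hε] at h1
    have h2 := hI1 _ h1 m (by rw [coeff_C_mul]; exact mul_ne_zero hr hm)
    have := F.homog 0 b c m (mem_support_iff.mpr hm)
    omega
  | succ i ih =>
    obtain ⟨c, m, hm⟩ := key (i + 1) b
    have h1 := F.homog (i + 1) b c m (mem_support_iff.mpr hm)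
    have h2 : mdeg m ≠ 0 := by
      rw [Ne, mdeg_eq_zero]
      rintro rfl
      exact hm (F.minimal (i + 1) b c)
    have := ih c
    omega

lemma coeff_d_cst (i : ℕ) (u : F.B (i + 1) → K) (c : F.B i) (m) :
    coeff m (F.d i (cst u) c) = ∑ b, u b * coeff m (ent F i b c) := by
  rw [d_apply, coeff_sum]
  simp [cst, coeff_C_mul]

include hI1 in
lemma nondeg_step (i : ℕ) (u : F.B (i + 1 + 1) → K)
    (hu : ∀ b, u b ≠ 0 → F.deg (i + 1 + 1) b = i + 3)
    (h : ∀ v, Matrix.vecMul u (A F (i + 1) v) = 0) : u = 0 := by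
  apply d_inj
  ext c m
  rw [coeff_d_cst]
  simp only [Finsupp.coe_zero, Pi.zero_apply, coeff_zero]
  by_cases h1 : mdeg m = 1
  · obtain ⟨v, rfl⟩ := mdeg_eq_one m h1
    exact congrFun (h v) c
  · refine Finset.sum_eq_zero fun b _ => ?_
    by_contra hne
    have hb := hu b (left_ne_zero_of_mul hne)
    have hm := right_ne_zero_of_mul hne
    have h2 := F.homog (i + 1) b c m (mem_support_iff.mpr hm)
    have h3 := deg_ge F hI1 i c
    have h4 : mdeg m ≠ 0 := by
      rw [Ne, mdeg_eq_zero]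
      rintro rfl
      exact hm (F.minimal (i + 1) b c)
    omega

include hI1 hI2 in
lemma nondeg_zero (u : F.B 1 → K)
    (hu : ∀ b, u b ≠ 0 → F.deg 1 b = 2)
    (h : ∀ p q, p ≠ q → p ∈ Y → q ∈ Y → ∑ b, u b * a F p q b = 0) : u = 0 := by
  apply d_inj F 0
  obtain ⟨c0, r, hr, hd, hun, hε⟩ := B0 F hI1
  ext c m
  rw [hun c]
  simp only [Finsupp.coe_zero, Pi.zero_apply, coeff_zero]
  by_contra hne
  have hε' : coeff m (F.ε (F.d 0 (cst u))) ≠ 0 := by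
    rw [hε, coeff_C_mul]
    exact mul_ne_zero hr hne
  have hmem : F.ε (F.d 0 (cst u)) ∈ I := by
    have : F.d 0 (cst u) ∈ Submodule.comap F.ε (I : Submodule _ _) := by
      rw [← F.exact0]
      exact ⟨_, rfl⟩
    exact this
  rw [coeff_d_cst] at hne
  obtain ⟨b, -, hb⟩ := Finset.exists_ne_zero_of_sum_ne_zero hne
  have hb2 := hu b (left_ne_zero_of_mul hb)
  have hdeg : mdeg m + F.deg 0 c0 = F.deg 1 b := F.homog 0 b c0 m (mem_support_iff.mpr (right_ne_zero_of_mul hb))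
  obtain ⟨p, q, hpq, hp, hq, rfl⟩ := hI2 _ hmem m hε' (by omega)
  apply hne
  have := h p q hpq hp hq
  simp only [a, gen, hε, coeff_C_mul] at this
  have h5 : r * ∑ b, u b * coeff (Finsupp.single p 1 + Finsupp.single q 1) (ent F 0 b c0) = 0 := by
    rw [← this, Finset.mul_sum]
    refine Finset.sum_congr rfl fun b _ => ?_
    rw [ent]
    ring
  exact (mul_eq_zero.mp h5).resolve_left hr

/-- functionals annihilated by many variables -/
def Good (k : ℕ) (W : F.B (k + 1) → K) : Prop :=
  W = 0 ∨ ∃ s : Finset σ, k + 4 ≤ s.card ∧ ∀ v ∈ s, (A F (k + 1) v).mulVec W = 0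

lemma good_step (k : ℕ) (W : F.B (k + 1) → K) (h : Good F k W) (v : σ) :
    Good F (k + 1) ((A F (k + 1) v).mulVec W) := by
  classical
  rcases h with rfl | ⟨s, hs, hW⟩
  · left; simp
  by_cases hv : v ∈ s
  · left; exact hW v hv
  right
  refine ⟨insert v s, by rw [Finset.card_insert_of_notMem hv]; omega, fun w hw => ?_⟩
  rw [Matrix.mulVec_mulVec]
  by_cases hwv : w = v
  · subst hwv
    rw [A_sq, Matrix.zero_mulVec]
  · have hws : w ∈ s := (Finset.mem_insert.mp hw).resolve_left hwv
    rw [A_anti F (k + 1) hwv, Matrix.neg_mulVec, ← Matrix.mulVec_mulVec, hW w hws]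
    simp

include hI1 hI2 in
lemma nondeg {x z : σ} (hxz : x ≠ z) (hx : x ∉ Y) (hz : z ∉ Y) (k : ℕ) (u : F.B (k + 1) → K)
    (hu : ∀ b, u b ≠ 0 → F.deg (k + 1) b = k + 2)
    (h : ∀ W, Good F k W → ∑ b, u b * W b = 0) : u = 0 := by
  classical
  induction k with
  | zero =>
    refine nondeg_zero F Y hI1 hI2 u hu fun p q hpq hp hq => h _ (Or.inr ⟨{x, z, p, q}, ?_, ?_⟩)
    · have h1 : x ≠ p := fun e => hx (e ▸ hp)
      have h2 : x ≠ q := fun e => hx (e ▸ hq)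
      have h3 : z ≠ p := fun e => hz (e ▸ hp)
      have h4 : z ≠ q := fun e => hz (e ▸ hq)
      rw [Finset.card_insert_of_notMem (by simp [*]), Finset.card_insert_of_notMem (by simp [*]),
        Finset.card_pair hpq]
    · intro v hv
      refine A_a F Y hI1 hI2 hpq ?_
      simp only [Finset.mem_insert, Finset.mem_singleton] at hv
      rcases hv with rfl | rfl | rfl | rfl <;> simp [*]
  | succ k ih =>
    refine nondeg_step F hI1 k u hu fun v => ih _ (fun c hc => ?_) fun W hW => ?_
    · obtain ⟨b, -, hb⟩ := Finset.exists_ne_zero_of_sum_ne_zero hc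
      have h1 := hu b (left_ne_zero_of_mul hb)
      have h2 := F.homog (k + 1) b c _ (mem_support_iff.mpr (right_ne_zero_of_mul hb))
      rw [mdeg_single] at h2
      omega
    · have := h _ (good_step F k W hW v)
      change u ⬝ᵥ (A F (k + 1) v).mulVec W = 0 at this
      rw [Matrix.dotProduct_mulVec] at this
      exact this

include hI1 hI2 in
theorem vanish [Fintype σ] {x z : σ} (hxz : x ≠ z) (hx : x ∉ Y) (hz : z ∉ Y) (k : ℕ)
    (hk : Fintype.card σ < k + 4) (b : F.B (k + 1)) : F.deg (k + 1) b ≠ k + 2 := by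
  classical
  intro hb
  have : (Pi.single b 1 : F.B (k + 1) → K) = 0 := by
    refine nondeg F Y hI1 hI2 hxz hx hz k _ (fun c hc => ?_) fun W hW => ?_
    · by_cases h : c = b
      · rw [h, hb]
      · simp [h] at hc
    · rcases hW with rfl | ⟨s, hs, -⟩
      · simp
      · have := s.card_le_univ
        omega
  simpa using congrFun this b

end vanish

section resolution

variable {K : Type*} [Field K] {σ : Type*}

/-- the part of `p` that has total degree `D` when the generator has degree `e` -/
noncomputable def pc (e D : ℕ) (p : MvPolynomial σ K) : MvPolynomial σ K :=
  if e ≤ D then homogeneousComponent (D - e) p else 0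

lemma coeff_pc (e D : ℕ) (p : MvPolynomial σ K) (m : σ →₀ ℕ) :
    coeff m (pc e D p) = if mdeg m + e = D then coeff m p else 0 := by
  rw [mdeg_eq_degree, pc]
  split_ifs with h1 h2 h2
  · rw [coeff_homogeneousComponent, if_pos (by omega)]
  · rw [coeff_homogeneousComponent, if_neg (by omega)]
  · omega
  · simp

lemma pc_sum {ι : Type*} (s : Finset ι) (e D : ℕ) (p : ι → MvPolynomial σ K) :
    pc e D (∑ i ∈ s, p i) = ∑ i ∈ s, pc e D (p i) := by
  unfold pc
  split_ifs
  · rw [map_sum]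
  · simp

lemma pc_mul (e e' D : ℕ) (p q : MvPolynomial σ K)
    (hq : ∀ m, coeff m q ≠ 0 → mdeg m + e = e') : pc e D (p * q) = pc e' D p * q := by
  classical
  ext m
  rw [coeff_pc, coeff_mul, coeff_mul]
  trans ∑ x ∈ Finset.HasAntidiagonal.antidiagonal m,
    if mdeg m + e = D then coeff x.1 p * coeff x.2 q else 0
  · split_ifs <;> simp
  refine Finset.sum_congr rfl fun x hx => ?_
  rw [Finset.HasAntidiagonal.mem_antidiagonal] at hx
  rw [coeff_pc]
  by_cases h : coeff x.2 q = 0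
  · simp [h]
  · have h1 := hq _ h
    have h2 : mdeg m + e = mdeg x.1 + e' := by
      rw [← hx, mdeg_add, ← h1]
      ring
    rw [h2, ite_mul, zero_mul]

noncomputable def comp {k : ℕ} (deg : Fin k → ℕ) (D : ℕ) (f : Fin k →₀ MvPolynomial σ K) :
    Fin k →₀ MvPolynomial σ K :=
  Finsupp.equivFunOnFinite.symm fun b => pc (deg b) D (f b)

lemma comp_apply {k : ℕ} (deg : Fin k → ℕ) (D : ℕ) (f : Fin k →₀ MvPolynomial σ K) (b : Fin k) :
    comp deg D f b = pc (deg b) D (f b) := rfl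

lemma comp_map {k k' : ℕ} (deg : Fin k → ℕ) (deg' : Fin k' → ℕ)
    (φ : (Fin k' →₀ MvPolynomial σ K) →ₗ[MvPolynomial σ K] (Fin k →₀ MvPolynomial σ K))
    (h : ∀ b c m, coeff m (φ (Finsupp.single b 1) c) ≠ 0 → mdeg m + deg c = deg' b)
    (D : ℕ) (f : Fin k' →₀ MvPolynomial σ K) :
    φ (comp deg' D f) = comp deg D (φ f) := by
  ext1 c
  rw [comp_apply, lin_apply φ f, lin_apply φ (comp deg' D f), Finsupp.finsetSum_apply,
    Finsupp.finsetSum_apply, pc_sum]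
  refine Finset.sum_congr rfl fun b _ => ?_
  rw [Finsupp.smul_apply, Finsupp.smul_apply, smul_eq_mul, smul_eq_mul, comp_apply,
    pc_mul _ _ _ _ _ (h b c)]

noncomputable def bnd {k : ℕ} (deg : Fin k → ℕ) (f : Fin k →₀ MvPolynomial σ K) : ℕ :=
  ∑ b, ((f b).totalDegree + deg b) + 1

lemma sum_comp {k : ℕ} (deg : Fin k → ℕ) (f : Fin k →₀ MvPolynomial σ K) :
    ∑ D : Fin (bnd deg f), comp deg D f = f := by
  classical
  ext b m
  rw [Finsupp.finsetSum_apply, coeff_sum]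
  simp only [comp_apply, coeff_pc]
  by_cases h : coeff m (f b) = 0
  · simp [h]
  · have h1 : mdeg m ≤ (f b).totalDegree := le_totalDegree (mem_support_iff.mpr h)
    have h2 : (f b).totalDegree + deg b ≤ ∑ b, ((f b).totalDegree + deg b) :=
      Finset.single_le_sum (f := fun b => (f b).totalDegree + deg b) (fun _ _ => Nat.zero_le _)
        (Finset.mem_univ b)
    have h3 : mdeg m + deg b < bnd deg f := by
      unfold bnd
      omega
    rw [Finset.sum_eq_single ⟨_, h3⟩]
    · simp
    · intro D _ hD
      rw [if_neg]
      intro h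
      exact hD (Fin.ext h.symm)
    · intro h
      exact absurd (Finset.mem_univ _) h

variable (K σ) in
structure Stage where
  k : ℕ
  deg : Fin k → ℕ
  N : Submodule (MvPolynomial σ K) (Fin k →₀ MvPolynomial σ K)
  homog : ∀ f ∈ N, ∀ D, comp deg D f ∈ N
  min : ∀ f ∈ N, ∀ c, coeff 0 (f c) = 0

/-- `N` has a generating system of `k'` homogeneous elements -/
def HasGens (T : Stage K σ) (k' : ℕ) : Prop :=
  ∃ (g : Fin k' → (Fin T.k →₀ MvPolynomial σ K)) (deg' : Fin k' → ℕ),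
    (∀ j c m, coeff m (g j c) ≠ 0 → mdeg m + T.deg c = deg' j) ∧
      Submodule.span (MvPolynomial σ K) (Set.range g) = T.N

lemma exists_gens [Finite σ] (T : Stage K σ) : ∃ k', HasGens T k' := by
  classical
  obtain ⟨s, hs⟩ : T.N.FG := IsNoetherian.noetherian T.N
  let ι := Σ f : s, Fin (bnd T.deg f.1)
  obtain ⟨k', ⟨e⟩⟩ := Finite.exists_equiv_fin ι
  let G : ι → (Fin T.k →₀ MvPolynomial σ K) := fun x => comp T.deg x.2 x.1.1
  refine ⟨k', G ∘ e.symm, fun j => ((e.symm j).2 : ℕ), ?_, ?_⟩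
  · intro j c m h
    simp only [G, Function.comp_apply, comp_apply, coeff_pc] at h
    by_contra hne
    exact h (if_neg hne)
  · rw [Set.range_comp, e.symm.surjective.range_eq, Set.image_univ]
    apply le_antisymm
    · rw [Submodule.span_le]
      rintro _ ⟨x, rfl⟩
      apply T.homog
      rw [← hs]
      exact Submodule.subset_span x.1.2
    · rw [← hs, Submodule.span_le]
      intro f hf
      rw [SetLike.mem_coe, ← sum_comp T.deg f]
      refine Submodule.sum_mem _ fun D _ => Submodule.subset_span ⟨⟨⟨f, hf⟩, D⟩, rfl⟩

lemma exists_step [Finite σ] (T : Stage K σ) : ∃ (T' : Stage K σ)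
    (d : (Fin T'.k →₀ MvPolynomial σ K) →ₗ[MvPolynomial σ K] (Fin T.k →₀ MvPolynomial σ K)),
    LinearMap.range d = T.N ∧ LinearMap.ker d = T'.N ∧
      ∀ b c m, coeff m (d (Finsupp.single b 1) c) ≠ 0 → mdeg m + T.deg c = T'.deg b := by
  classical
  have hex := exists_gens T
  obtain ⟨g, deg', hg, hspan⟩ := Nat.find_spec hex
  have hmin : ∀ j, j < Nat.find hex → ¬ HasGens T j := fun j hj => Nat.find_min hex hj
  generalize Nat.find hex = k' at g deg' hg hspan hmin
  let d := Finsupp.linearCombination (MvPolynomial σ K) g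
  have hd : ∀ b c m, coeff m (d (Finsupp.single b 1) c) ≠ 0 → mdeg m + T.deg c = deg' b := by
    intro b c m h
    simp only [d, Finsupp.linearCombination_single, one_smul] at h
    exact hg b c m h
  have hker : ∀ f ∈ LinearMap.ker d, ∀ D, comp deg' D f ∈ LinearMap.ker d := by
    intro f hf D
    rw [LinearMap.mem_ker] at hf ⊢
    rw [comp_map T.deg deg' d hd, hf]
    ext c m
    simp [comp_apply, coeff_pc]
  refine ⟨⟨k', deg', LinearMap.ker d, hker, ?_⟩, d, ?_, rfl, hd⟩
  · intro f hf c
    by_contra hne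
    obtain ⟨k, rfl⟩ : ∃ k, k' = k + 1 := ⟨k' - 1, by have := c.2; omega⟩
    refine hmin k (by omega) ⟨g ∘ c.succAbove, deg' ∘ c.succAbove, fun j => hg _, ?_⟩
    have h1 := hker f hf (deg' c)
    set h := comp deg' (deg' c) f with hh
    set r := coeff 0 (f c)
    have h2 : h c = C r := by
      ext m
      rw [hh, comp_apply, coeff_pc, coeff_C]
      simp only [Nat.add_eq_right, mdeg_eq_zero, eq_comm (a := (0 : σ →₀ ℕ))]
      split_ifs with h3
      · rw [h3]
      · rfl
    rw [LinearMap.mem_ker, lin_apply d h, Fin.sum_univ_succAbove _ c, h2] at h1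
    simp only [d, Finsupp.linearCombination_single, one_smul] at h1
    have h4 : g c ∈ Submodule.span (MvPolynomial σ K) (Set.range (g ∘ c.succAbove)) := by
      have h5 : g c = (-C r⁻¹ : MvPolynomial σ K) •
          ∑ i, h (c.succAbove i) • g (c.succAbove i) := by
        rw [eq_neg_of_add_eq_zero_right h1, neg_smul_neg, smul_smul, ← C_mul, inv_mul_cancel₀ hne]
        simp
      rw [h5]
      exact Submodule.smul_mem _ _ (Submodule.sum_mem _ fun i _ => Submodule.smul_mem _ _
        (Submodule.subset_span ⟨i, rfl⟩))
    apply le_antisymm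
    · rw [← hspan]
      exact Submodule.span_mono (Set.range_comp_subset_range _ _)
    · rw [← hspan, Submodule.span_le]
      rintro _ ⟨j, rfl⟩
      rcases Fin.eq_self_or_eq_succAbove c j with rfl | ⟨i, rfl⟩
      · exact h4
      · exact Submodule.subset_span ⟨i, rfl⟩
  · rw [Finsupp.range_linearCombination, hspan]

theorem exists_res [Finite σ] (I : Ideal (MvPolynomial σ K))
    (hI0 : ∀ f ∈ I, coeff 0 f = 0)
    (hI : ∀ f ∈ I, ∀ D, homogeneousComponent D f ∈ I) :
    Nonempty (MinGradedFreeRes K σ I) := by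
  classical
  choose next d h1 h2 h3 using exists_step (K := K) (σ := σ)
  let ε : (Fin 1 →₀ MvPolynomial σ K) →ₗ[MvPolynomial σ K] MvPolynomial σ K := Finsupp.lapply 0
  let T0 : Stage K σ :=
    { k := 1
      deg := fun _ => 0
      N := Submodule.comap ε (I : Submodule _ _)
      homog := by
        intro f hf D
        have : ε f ∈ I := hf
        have h := hI _ this D
        have h' : ε (comp (fun _ => 0) D f) = homogeneousComponent D (ε f) := by
          simp [ε, comp_apply, pc]
        rw [Submodule.mem_comap, h']
        exact h
      min := by
        intro f hf c
        have : f 0 ∈ I := hf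
        rw [Subsingleton.elim c 0]
        exact hI0 _ this }
  let seq : ℕ → Stage K σ := fun i => Nat.rec T0 (fun _ T => next T) i
  exact ⟨{
    B := fun i => Fin (seq i).k
    finB := fun i => inferInstance
    deg := fun i => (seq i).deg
    d := fun i => d (seq i)
    ε := ε
    ε_homog := by
      intro b
      have hb : b = (0 : Fin 1) := Subsingleton.elim (α := Fin 1) b 0
      subst hb
      have : ε (Finsupp.single 0 1) = 1 := by simp [ε]
      change (ε (Finsupp.single 0 1)).IsHomogeneous 0
      rw [this]
      exact isHomogeneous_one _ _
    surj := by
      intro s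
      refine ⟨(Finsupp.single (0 : Fin 1) s : Fin 1 →₀ MvPolynomial σ K), ?_⟩
      have : ε (Finsupp.single 0 s) = s := by simp [ε]
      rw [this, sub_self]
      exact zero_mem _
    exact0 := h1 T0
    exact := fun i => (h1 (next (seq i))).trans (h2 (seq i)).symm
    homog := fun i b c m hm => h3 (seq i) b c m (mem_support_iff.mp hm)
    minimal := by
      intro i b c
      refine (seq i).min _ ?_ c
      rw [← h1 (seq i)]
      exact ⟨_, rfl⟩ }⟩

end resolution

section concrete

variable (K : Type*) [Field K] (n : ℕ)

def yi (i : Fin n) : Fin (n + 2) := i.succ.castSucc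

/-- exponents of the generators -/
def gexp (hn : 1 ≤ n) : Set (Fin (n + 2) →₀ ℕ) :=
  {m | ∃ i j : Fin n, i < j ∧ m = Finsupp.single (yi n i) 1 + Finsupp.single (yi n j) 1} ∪
  {m | ∃ k : Fin n, (k : ℕ) < n - 1 ∧ m = Finsupp.single 0 1 + Finsupp.single (yi n k) 1 +
    Finsupp.single (Fin.last (n + 1)) 1} ∪
  {Finsupp.single 0 1 + Finsupp.single (yi n ⟨n - 1, by omega⟩) 2 +
    Finsupp.single (Fin.last (n + 1)) 1}

lemma ini_eq (hn : 1 ≤ n) :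
    diamondIni K n hn = Ideal.span ((fun s => monomial s (1 : K)) '' gexp n hn) := by
  unfold diamondIni gexp
  congr 1
  rw [Set.image_union, Set.image_union, Set.image_singleton]
  congr 1
  · congr 1
    · ext f
      constructor
      · rintro ⟨i, j, h, rfl⟩
        exact ⟨_, ⟨i, j, h, rfl⟩, by simp [yP, yi, X, monomial_mul]⟩
      · rintro ⟨_, ⟨i, j, h, rfl⟩, rfl⟩
        exact ⟨i, j, h, by simp [yP, yi, X, monomial_mul]⟩
    · ext f
      constructor
      · rintro ⟨k, h, rfl⟩
        exact ⟨_, ⟨k, h, rfl⟩, by simp [yP, xP, zP, yi, X, monomial_mul]⟩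
      · rintro ⟨_, ⟨k, h, rfl⟩, rfl⟩
        exact ⟨k, h, by simp [yP, xP, zP, yi, X, monomial_mul]⟩
  · simp [yP, xP, zP, yi, X, monomial_mul, monomial_pow]

lemma ini_le (hn : 1 ≤ n) (f) (hf : f ∈ diamondIni K n hn) (m) (hm : coeff m f ≠ 0) :
    ∃ g ∈ gexp n hn, g ≤ m := by
  rw [ini_eq, mem_ideal_span_monomial_image] at hf
  exact hf m (mem_support_iff.mpr hm)

lemma gexp_cases (hn : 1 ≤ n) (g) (hg : g ∈ gexp n hn) :
    (∃ i j : Fin n, i < j ∧ g = Finsupp.single (yi n i) 1 + Finsupp.single (yi n j) 1) ∨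
      3 ≤ mdeg g := by
  rcases hg with (h | ⟨k, -, rfl⟩) | h
  · left; exact h
  · right; simp [mdeg_add, mdeg_single]
  · right
    rw [Set.mem_singleton_iff] at h
    subst h
    simp [mdeg_add, mdeg_single]

lemma ini_one (hn : 1 ≤ n) (f) (hf : f ∈ diamondIni K n hn) (m) (hm : coeff m f ≠ 0) :
    2 ≤ mdeg m := by
  obtain ⟨g, hg, hle⟩ := ini_le K n hn f hf m hm
  obtain ⟨t, rfl⟩ := exists_add_of_le hle
  rw [mdeg_add]
  rcases gexp_cases n hn g hg with ⟨i, j, -, rfl⟩ | h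
  · simp only [mdeg_add, mdeg_single]
    omega
  · omega

lemma ini_two (hn : 1 ≤ n) (f) (hf : f ∈ diamondIni K n hn) (m) (hm : coeff m f ≠ 0)
    (hd : mdeg m = 2) : ∃ p q, p ≠ q ∧ p ∈ Set.range (yi n) ∧ q ∈ Set.range (yi n) ∧
      m = Finsupp.single p 1 + Finsupp.single q 1 := by
  obtain ⟨g, hg, hle⟩ := ini_le K n hn f hf m hm
  obtain ⟨t, rfl⟩ := exists_add_of_le hle
  rw [mdeg_add] at hd
  rcases gexp_cases n hn g hg with ⟨i, j, hij, rfl⟩ | h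
  · simp only [mdeg_add, mdeg_single] at hd
    have ht : t = 0 := by
      rw [← mdeg_eq_zero]
      omega
    refine ⟨yi n i, yi n j, ?_, ⟨i, rfl⟩, ⟨j, rfl⟩, by rw [ht, add_zero]⟩
    intro h
    have := congrArg Fin.val h
    simp [yi] at this
    omega
  · omega

lemma ini_homog (hn : 1 ≤ n) (f) (hf : f ∈ diamondIni K n hn) (D : ℕ) :
    homogeneousComponent D f ∈ diamondIni K n hn := by
  rw [ini_eq, mem_ideal_span_monomial_image]
  intro m hm
  apply ini_le K n hn f hf
  rw [mem_support_iff, coeff_homogeneousComponent] at hm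
  intro h
  simp [h] at hm

end concrete

end DiamondAux

theorem diamond_ini_betti_n_np1 (K : Type*) [Field K] (n : ℕ) (hn : 3 ≤ n) :
    Nonempty (MinGradedFreeRes K (Fin (n + 2)) (diamondIni K n (by omega))) ∧
      ∀ F : MinGradedFreeRes K (Fin (n + 2)) (diamondIni K n (by omega)),
        F.betti n (n + 1) = 0 := by
  refine ⟨DiamondAux.exists_res _ (fun f hf => ?_) (DiamondAux.ini_homog K n _), fun F => ?_⟩
  · by_contra h
    have := DiamondAux.ini_one K n _ f hf 0 h
    simp [mdeg] at this
  · obtain ⟨k, rfl⟩ : ∃ k, n = k + 1 := ⟨n - 1, by omega⟩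
    have hv := DiamondAux.vanish F (Set.range (DiamondAux.yi (k + 1)))
      (DiamondAux.ini_one K (k + 1) _) (DiamondAux.ini_two K (k + 1) _)
      (x := 0) (z := Fin.last (k + 1 + 1)) (Fin.last_pos.ne)
      (by
        rintro ⟨i, hi⟩
        have := congrArg Fin.val hi
        simp [DiamondAux.yi] at this)
      (by
        rintro ⟨i, hi⟩
        have := congrArg Fin.val hi
        simp [DiamondAux.yi] at this
        omega) k (by simp)
    unfold MinGradedFreeRes.betti
    have : IsEmpty {b : F.B (k + 1) // F.deg (k + 1) b = k + 1 + 1} := ⟨fun b => hv b.1 b.2⟩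
    exact Nat.card_of_isEmpty
end
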